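/- Let φ ∈ L^∞ₛ(∂𝔹). Then ‖H_φ‖ = inf{‖φ - f‖_{L^∞(∂𝔹)} : f ∈ H^∞(∂𝔹)}, i.e. the norm of the Hankel operator with symbol φ equals the L^∞ distance of φ from the bounded slice regular functions. -/

import Mathlib

noncomputable section

open MeasureTheory Quaternion

instance : MeasurableSpace (Quaternion ℝ) := borel _
instance : BorelSpace (Quaternion ℝ) := ⟨rfl⟩

/-- The sphere `𝕊` of imaginary units of `ℍ`. -/
def IU : Type := {I : Quaternion ℝ // I ^ 2 = -1}

instance : MeasurableSpace IU := Subtype.instMeasurableSpace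

/-- The point `e^{tI} = cos t + (sin t) I`. -/
def eI (I : Quaternion ℝ) (t : ℝ) : Quaternion ℝ :=
  ((Real.cos t : ℝ) : Quaternion ℝ) + Real.sin t • I

/-- The normalized measure `dΣ(e^{tI}) = dσ(I) dt` on `∂𝔹`, obtained by pushing forward
`σ ⊗ (dt on (0, 2π])` under `(I, t) ↦ e^{tI}` and normalizing by `2π`. -/
def sphereMeasure (σ : Measure IU) : Measure (Quaternion ℝ) :=
  (ENNReal.ofReal (2 * Real.pi))⁻¹ •
    Measure.map (fun p : IU × ℝ => eI p.1.1 p.2)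
      (σ.prod (volume.restrict (Set.Ioc 0 (2 * Real.pi))))

/-- A slice function on `∂𝔹`: it satisfies the representation formula. -/
def IsSlice (f : Quaternion ℝ → Quaternion ℝ) : Prop :=
  ∀ x y : ℝ, ∀ I J : Quaternion ℝ, I ^ 2 = -1 → J ^ 2 = -1 → x ^ 2 + y ^ 2 = 1 →
    f ((x : Quaternion ℝ) + y • J) =
      ((1 - J * I) / 2) * f ((x : Quaternion ℝ) + y • I) +
      ((1 + J * I) / 2) * f ((x : Quaternion ℝ) - y • I)

/-- The `n`-th Fourier coefficient of (the restriction to the slice of `I` of) a function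
on `∂𝔹`: `φ̂(n) = (1/2π) ∫₀^{2π} e^{-nIt} φ(e^{It}) dt`. -/
def fourierCoef (φ : Quaternion ℝ → Quaternion ℝ) (I : Quaternion ℝ) (n : ℤ) : Quaternion ℝ :=
  (2 * Real.pi)⁻¹ • ∫ t in (0:ℝ)..(2 * Real.pi), eI I (-(n * t)) * φ (eI I t)

/-!
A slice function on `∂𝔹` has the form `g (cos t + J sin t) = F₁ t + J (F₂ t)`.  The function
`F = F₁ + ι F₂` on the circle, with values in the biquaternions, acts on `L²` by multiplication
with norm at most `sup_J ‖F₁ + J F₂‖_∞`, and rotation invariance identifies this supremum with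
`‖g‖_∞`.  The Hankel operator of `φ` is a compression of the multiplication by `φ - f` for every
`f ∈ H^∞`, because it only sees the negative coefficients; hence `‖H_φ‖ ≤ ‖φ - f‖_∞`.

Conversely, a Hankel matrix `H` of norm at most `C` remains so after prepending one suitable
antidiagonal (Parrott's lemma): the new entry is found by extending a right-linear functional
dominated by the seminorm `√(C² ‖a‖² - ‖H a‖²)`.  Iterating yields a two-sided sequence whose
Toeplitz matrix is bounded by `C`.  Its Fejér means are then bounded by `C` on every slice and
converge almost everywhere along a subsequence, to a slice function `ψ` with `‖ψ‖_∞ ≤ C` and the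
same negative coefficients as `φ`; the approximant is `φ - ψ ∈ H^∞`.
-/

/-! ### Imaginary units -/

section ImaginaryUnits

theorem norm_sq_eq_re_mul_star (q : ℍ[ℝ]) : ‖q‖ ^ 2 = (q * star q).re := by
  rw [← inner_def, real_inner_self_eq_norm_sq]

theorem re_le_norm (q : ℍ[ℝ]) : q.re ≤ ‖q‖ := by
  simpa [inner_def] using real_inner_le_norm q 1

theorem norm_sq_eq_re_sq_add_norm_im_sq (q : ℍ[ℝ]) : ‖q‖ ^ 2 = q.re ^ 2 + ‖q.im‖ ^ 2 := by
  simp only [sq ‖_‖, ← normSq_eq_norm_mul_self, normSq_def', re_im, imI_im, imJ_im, imK_im]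
  ring

theorem sq_eq_neg_one_iff {J : ℍ[ℝ]} : J ^ 2 = -1 ↔ J.re = 0 ∧ ‖J‖ = 1 := by
  have mul_star_of_norm (hJ : ‖J‖ = 1) : J * star J = 1 := by
    rw [self_mul_star, normSq_eq_norm_mul_self, hJ, mul_one, coe_one]
  refine ⟨fun hJ => ?_, fun ⟨hre, hJ⟩ => ?_⟩
  · have norm_J : ‖J‖ = 1 := by
      rw [← pow_eq_one_iff_of_nonneg (norm_nonneg J) two_ne_zero, ← norm_pow, hJ, norm_neg,
        norm_one]
    have J_ne_zero : J ≠ 0 := norm_ne_zero_iff.mp (norm_J ▸ one_ne_zero)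
    refine ⟨star_eq_neg.mp (mul_left_cancel₀ J_ne_zero ?_), norm_J⟩
    rw [mul_star_of_norm norm_J, mul_neg, ← sq, hJ, neg_neg]
  · rw [← neg_eq_iff_eq_neg, sq, ← mul_neg, ← star_eq_neg.mpr hre, mul_star_of_norm hJ]

theorem div_two_eq_smul (q : ℍ[ℝ]) : q / 2 = (2⁻¹ : ℝ) • q := by
  rw [div_eq_mul_inv, ← mul_coe_eq_smul, coe_inv]
  rfl

/-- The imaginary unit `i`. -/
def qi : ℍ[ℝ] := ⟨0, 1, 0, 0⟩

/-- The imaginary unit `j`. -/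
def qj : ℍ[ℝ] := ⟨0, 0, 1, 0⟩

theorem qi_sq : qi ^ 2 = -1 := by
  rw [sq]
  ext <;> simp only [re_mul, imI_mul, imJ_mul, imK_mul] <;> simp [qi]

theorem exists_sq_eq_neg_one_inner_eq_norm {v : ℍ[ℝ]} (hv : v.re = 0) :
    ∃ J : ℍ[ℝ], J ^ 2 = -1 ∧ inner ℝ v J = ‖v‖ := by
  rcases eq_or_ne v 0 with v_eq_zero | hv0
  · exact ⟨qi, qi_sq, by rw [v_eq_zero, inner_zero_left, norm_zero]⟩
  · have norm_ne_zero : ‖v‖ ≠ 0 := norm_ne_zero_iff.mpr hv0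
    refine ⟨‖v‖⁻¹ • v, sq_eq_neg_one_iff.mpr ⟨by simp [hv], ?_⟩, ?_⟩
    · rw [norm_smul, norm_inv, norm_norm, inv_mul_cancel₀ norm_ne_zero]
    · rw [real_inner_smul_right, real_inner_self_eq_norm_sq, sq, inv_mul_cancel_left₀ norm_ne_zero]

theorem norm_eI {J : ℍ[ℝ]} (hJ : J ^ 2 = -1) (t : ℝ) : ‖eI J t‖ = 1 := by
  obtain ⟨re_J, norm_J⟩ := sq_eq_neg_one_iff.mp hJ
  rw [← pow_eq_one_iff_of_nonneg (norm_nonneg _) two_ne_zero, eI, norm_add_sq_real, norm_smul,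
    norm_J, norm_coe, real_inner_smul_right, inner_def]
  simp [re_J]

theorem eI_add {J : ℍ[ℝ]} (hJ : J ^ 2 = -1) (s t : ℝ) : eI J (s + t) = eI J s * eI J t := by
  simp only [eI, Real.cos_add, Real.sin_add, mul_add, add_mul, smul_mul_assoc, mul_smul_comm,
    ← sq, hJ, coe_mul_eq_smul, mul_coe_eq_smul, smul_smul]
  ext <;> simp <;> ring

theorem eI_neg (J : ℍ[ℝ]) (t : ℝ) : eI J (-t) = eI (-J) t := by
  simp [eI]

theorem eI_int_mul_two_pi_sub (J : ℍ[ℝ]) (n : ℤ) (t : ℝ) :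
    eI J (n * (2 * Real.pi - t)) = eI (-J) (n * t) := by
  simp [eI, mul_sub, Real.cos_int_mul_two_pi_sub, Real.sin_int_mul_two_pi_sub]

theorem eI_two_pi_sub (J : ℍ[ℝ]) (t : ℝ) : eI J (2 * Real.pi - t) = eI (-J) t := by
  simpa using eI_int_mul_two_pi_sub J 1 t

end ImaginaryUnits

/-! ### Right-linear functionals -/

section HahnBanach

open MulOpposite

theorem eq_of_forall_re_mul_eq {x y : ℍ[ℝ]} (h : ∀ q, (x * q).re = (y * q).re) : x = y := by
  rw [← sub_eq_zero, ← norm_eq_zero, ← sq_eq_zero_iff, norm_sq_eq_re_mul_star, sub_mul, re_sub, h,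
    sub_self]

theorem exists_forall_eq_re_mul (g : ℍ[ℝ] →ₗ[ℝ] ℝ) : ∃ x : ℍ[ℝ], ∀ q, g q = (x * q).re := by
  refine ⟨star ((InnerProductSpace.toDual ℝ ℍ[ℝ]).symm g.toContinuousLinearMap), fun q => ?_⟩
  rw [← g.coe_toContinuousLinearMap', ← InnerProductSpace.toDual_symm_apply, inner_def,
    ← Quaternion.re_star, star_mul, star_star, ← sub_eq_zero, ← re_sub]
  simp only [re_sub, re_mul, re_star, imI_star, imJ_star, imK_star, mul_neg, sub_neg_eq_add,
    neg_mul]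
  ring

variable {V : Type*} [AddCommGroup V] [Module ℝ V] [Module ℍ[ℝ]ᵐᵒᵖ V] [IsScalarTower ℝ ℍ[ℝ]ᵐᵒᵖ V]

theorem exists_linearMap_re_mul_eq (g : V →ₗ[ℝ] ℝ) :
    ∃ L : V →ₗ[ℍ[ℝ]ᵐᵒᵖ] ℍ[ℝ], ∀ v q, (L v * q).re = g (op q • v) := by
  have orbit (v : V) : ∃ x : ℍ[ℝ], ∀ q, g (op q • v) = (x * q).re :=
    exists_forall_eq_re_mul
      { toFun := fun q => g (op q • v)
        map_add' := fun q r => by rw [op_add, add_smul, map_add]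
        map_smul' := fun r q => by rw [op_smul, smul_assoc, map_smul, RingHom.id_apply] }
  choose L hL using orbit
  refine ⟨⟨⟨L, fun v w => ?_⟩, fun r v => ?_⟩, fun v q => (hL v q).symm⟩
  · refine eq_of_forall_re_mul_eq fun q => ?_
    rw [add_mul, re_add, ← hL, ← hL, ← hL, smul_add, map_add]
  · refine eq_of_forall_re_mul_eq fun q => ?_
    rw [RingHom.id_apply, MulOpposite.smul_eq_mul_unop, mul_assoc, ← hL, ← hL, op_mul, op_unop,
      mul_smul]

theorem exists_extension_norm_le_seminorm (p : Seminorm ℍ[ℝ]ᵐᵒᵖ V) (S : Submodule ℍ[ℝ]ᵐᵒᵖ V)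
    (F : S →ₗ[ℍ[ℝ]ᵐᵒᵖ] ℍ[ℝ]) (hF : ∀ v : S, ‖F v‖ ≤ p v) :
    ∃ L : V →ₗ[ℍ[ℝ]ᵐᵒᵖ] ℍ[ℝ], (∀ v : S, L v = F v) ∧ ∀ v, ‖L v‖ ≤ p v := by
  let reF : S →ₗ[ℝ] ℝ :=
    { toFun := fun v => (F v).re
      map_add' := fun v w => by rw [map_add, re_add]
      map_smul' := fun r v => by rw [LinearMap.map_smul_of_tower, re_smul, RingHom.id_apply] }
  obtain ⟨g, hgf, hgp⟩ := exists_extension_of_le_sublinear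
    ⟨S.restrictScalars ℝ, reF⟩ p
    (fun r hr v => by
      rw [← one_smul ℍ[ℝ]ᵐᵒᵖ v, ← smul_assoc, map_smul_eq_mul, one_smul, norm_smul, norm_one,
        mul_one, Real.norm_of_nonneg hr.le])
    (map_add_le_add p) fun v => (re_le_norm _).trans (hF v)
  obtain ⟨L, hL⟩ := exists_linearMap_re_mul_eq g
  refine ⟨L, fun v => eq_of_forall_re_mul_eq fun q => ?_, fun v => ?_⟩
  · calc (L v * q).re = g (op q • (v : V)) := hL v q
      _ = (F (op q • v)).re := hgf (op q • v)
      _ = (F v * q).re := by rw [map_smul, op_smul_eq_mul]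
  · have norm_sq_le : ‖L v‖ * ‖L v‖ ≤ ‖L v‖ * p v :=
      calc ‖L v‖ * ‖L v‖ = g (op (star (L v)) • v) := by
            rw [← sq, norm_sq_eq_re_mul_star, hL]
        _ ≤ p (op (star (L v)) • v) := hgp _
        _ = ‖L v‖ * p v := by rw [map_smul_eq_mul, norm_op, Quaternion.norm_star]
    rcases (norm_nonneg (L v)).eq_or_lt with h | h
    · rw [← h]
      exact apply_nonneg p v
    · exact le_of_mul_le_mul_left norm_sq_le h

end HahnBanach

/-! ### Hankel operators on square-summable sequences -/

section Hankel

open MulOpposite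

/-- Square-summable quaternionic sequences: the Taylor coefficients of the functions in
`H²(∂𝔹)`, with scalars acting on the right. -/
abbrev L2Seq : Type := lp (fun _ : ℕ => ℍ[ℝ]) 2

theorem hasSum_norm_sq (a : L2Seq) : HasSum (fun k => ‖a k‖ ^ 2) (‖a‖ ^ 2) := by
  simpa using lp.hasSum_norm (p := 2) (by norm_num) a

theorem memℓp_two_of_summable_norm_sq {f : ℕ → ℍ[ℝ]} (h : Summable fun k => ‖f k‖ ^ 2) :
    Memℓp f 2 :=
  memℓp_gen (by simpa using h)

theorem norm_op_smul (q : ℍ[ℝ]) (a : L2Seq) : ‖op q • a‖ = ‖q‖ * ‖a‖ := by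
  refine (sq_eq_sq₀ (norm_nonneg _) (by positivity)).mp ?_
  refine (hasSum_norm_sq _).unique ?_
  simpa only [mul_pow, lp.coeFn_smul, Pi.smul_apply, op_smul_eq_mul, norm_mul, mul_comm]
    using (hasSum_norm_sq a).mul_left (‖q‖ ^ 2)

/-- The backward shift. -/
def tail : L2Seq →ₗ[ℍ[ℝ]ᵐᵒᵖ] L2Seq where
  toFun a := ⟨fun k => a (k + 1),
    memℓp_two_of_summable_norm_sq ((summable_nat_add_iff 1).mpr (hasSum_norm_sq a).summable)⟩
  map_add' _ _ := rfl
  map_smul' _ _ := rfl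

theorem tail_apply (a : L2Seq) (k : ℕ) : tail a k = a (k + 1) := rfl

theorem norm_sq_eq_head_add_tail (a : L2Seq) : ‖a‖ ^ 2 = ‖a 0‖ ^ 2 + ‖tail a‖ ^ 2 := by
  rw [← (hasSum_norm_sq a).tsum_eq, (hasSum_norm_sq a).summable.tsum_eq_zero_add,
    ← (hasSum_norm_sq (tail a)).tsum_eq]
  rfl

/-- The sequence `x, γ 0, γ 1, …`. -/
def seqCons (x : ℍ[ℝ]) (γ : ℕ → ℍ[ℝ]) : ℕ → ℍ[ℝ]
  | 0 => x
  | k + 1 => γ k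

theorem exists_head_eq_tail_eq (x : ℍ[ℝ]) (a : L2Seq) :
    ∃ b : L2Seq, b 0 = x ∧ tail b = a :=
  ⟨⟨seqCons x a, memℓp_two_of_summable_norm_sq
    ((summable_nat_add_iff 1).mp (hasSum_norm_sq a).summable)⟩, rfl, rfl⟩

/-- The Hankel matrix `(γ (m + k))` defines an operator of norm at most `C` on `L2Seq`. -/
def HankelBoundedBy (γ : ℕ → ℍ[ℝ]) (C : ℝ) : Prop :=
  ∀ a : L2Seq, ∃ w : L2Seq, (∀ m, HasSum (fun k => γ (m + k) * a k) (w m)) ∧ ‖w‖ ≤ C * ‖a‖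

namespace HankelBoundedBy

variable {γ : ℕ → ℍ[ℝ]} {C : ℝ}

/-- The bounded operator with Hankel matrix `(γ (m + k))`. -/
def operator (h : HankelBoundedBy γ C) : L2Seq →ₗ[ℍ[ℝ]ᵐᵒᵖ] L2Seq where
  toFun a := (h a).choose
  map_add' a b := lp.ext <| funext fun m => ((h (a + b)).choose_spec.1 m).unique <| by
    simpa only [lp.coeFn_add, Pi.add_apply, mul_add]
      using ((h a).choose_spec.1 m).add ((h b).choose_spec.1 m)
  map_smul' q a := lp.ext <| funext fun m => ((h (q • a)).choose_spec.1 m).unique <| by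
    simpa only [RingHom.id_apply, lp.coeFn_smul, Pi.smul_apply, smul_eq_mul_unop, mul_assoc]
      using ((h a).choose_spec.1 m).mul_right q.unop

theorem hasSum_operator (h : HankelBoundedBy γ C) (a : L2Seq) (m : ℕ) :
    HasSum (fun k => γ (m + k) * a k) (h.operator a m) :=
  (h a).choose_spec.1 m

theorem norm_operator_le (h : HankelBoundedBy γ C) (a : L2Seq) : ‖h.operator a‖ ≤ C * ‖a‖ :=
  (h a).choose_spec.2

theorem tail_operator_tail (h : HankelBoundedBy γ C) {a : L2Seq} (ha : a 0 = 0) :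
    tail (h.operator (tail a)) = h.operator a := by
  refine lp.ext <| funext fun m => (h.hasSum_operator (tail a) (m + 1)).unique ?_
  have shifted := (hasSum_nat_add_iff' 1).mpr (h.hasSum_operator a m)
  simpa only [Finset.sum_range_one, ha, mul_zero, sub_zero, tail_apply, add_assoc, add_comm 1]
    using shifted

end HankelBoundedBy

section Defect

variable {E F : Type*} [NormedAddCommGroup E] [InnerProductSpace ℝ E]
  [NormedAddCommGroup F] [InnerProductSpace ℝ F]

/-- The defect form `C² ⟪x, y⟫ - ⟪T x, T y⟫` of an operator of norm at most `C`. -/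
abbrev defectCore (T : E →ₗ[ℝ] F) (C : ℝ) (hT : ∀ x, ‖T x‖ ≤ C * ‖x‖) :
    PreInnerProductSpace.Core ℝ E where
  inner x y := C ^ 2 * inner ℝ x y - inner ℝ (T x) (T y)
  conj_inner_symm x y := by simp [real_inner_comm]
  re_inner_nonneg x := by
    have : ‖T x‖ ^ 2 ≤ (C * ‖x‖) ^ 2 := by gcongr; exact hT x
    simpa [real_inner_self_eq_norm_sq, mul_pow] using this
  add_left x y z := by rw [map_add, inner_add_left, inner_add_left]; ring
  smul_left x y r := by
    rw [map_smul, real_inner_smul_left, real_inner_smul_left, conj_trivial]; ring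

/-- The defect `√(C² ‖x‖² - ‖T x‖²)` of an operator of norm at most `C`. -/
def defect (T : E →ₗ[ℝ] F) (C : ℝ) (x : E) : ℝ := √(C ^ 2 * ‖x‖ ^ 2 - ‖T x‖ ^ 2)

theorem defect_add_le {T : E →ₗ[ℝ] F} {C : ℝ} (hT : ∀ x, ‖T x‖ ≤ C * ‖x‖) (x y : E) :
    defect T C (x + y) ≤ defect T C x + defect T C y := by
  have defect_eq (z : E) :
      defect T C z = √(C ^ 2 * inner ℝ z z - inner ℝ (T z) (T z)) := by
    rw [defect, real_inner_self_eq_norm_sq, real_inner_self_eq_norm_sq]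
  rw [defect_eq, defect_eq, defect_eq]
  exact @norm_add_le E (@InnerProductSpace.Core.toSeminormedAddCommGroup ℝ E _ _ _
    (defectCore T C hT)).toSeminormedAddGroup x y

theorem defect_sq {T : E →ₗ[ℝ] F} {C : ℝ} (hT : ∀ x, ‖T x‖ ≤ C * ‖x‖) (x : E) :
    defect T C x ^ 2 = C ^ 2 * ‖x‖ ^ 2 - ‖T x‖ ^ 2 := by
  refine Real.sq_sqrt (sub_nonneg.mpr ?_)
  rw [← mul_pow]
  gcongr
  exact hT x

end Defect

namespace HankelBoundedBy

variable {γ : ℕ → ℍ[ℝ]} {C : ℝ}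

/-- The defect of the Hankel operator, as a seminorm on the right `ℍ`-module `L2Seq`. -/
def defectSeminorm (h : HankelBoundedBy γ C) : Seminorm ℍ[ℝ]ᵐᵒᵖ L2Seq :=
  Seminorm.of (defect (h.operator.restrictScalars ℝ) C)
    (defect_add_le h.norm_operator_le)
    fun q a => by
      rw [← op_unop q]
      simp only [defect, LinearMap.coe_restrictScalars, map_smul, norm_op_smul, norm_op]
      rw [← Real.sqrt_sq (norm_nonneg q.unop), ← Real.sqrt_mul (sq_nonneg _),
        Real.sqrt_sq (norm_nonneg q.unop)]
      ring_nf

theorem defectSeminorm_sq (h : HankelBoundedBy γ C) (a : L2Seq) :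
    h.defectSeminorm a ^ 2 = C ^ 2 * ‖a‖ ^ 2 - ‖h.operator a‖ ^ 2 :=
  defect_sq h.norm_operator_le a

theorem norm_operator_tail_le_defectSeminorm (h : HankelBoundedBy γ C) {a : L2Seq}
    (ha : a 0 = 0) : ‖h.operator (tail a) 0‖ ≤ h.defectSeminorm a := by
  refine (sq_le_sq₀ (norm_nonneg _) (apply_nonneg _ _)).mp ?_
  have bound : ‖h.operator (tail a)‖ ^ 2 ≤ (C * ‖tail a‖) ^ 2 := by
    gcongr
    exact h.norm_operator_le _
  rw [norm_sq_eq_head_add_tail, h.tail_operator_tail ha, mul_pow] at bound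
  rw [h.defectSeminorm_sq, norm_sq_eq_head_add_tail a, ha, norm_zero]
  linarith

theorem exists_head_norm_le_defectSeminorm (h : HankelBoundedBy γ C) :
    ∃ x, ∀ a : L2Seq, ‖x * a 0 + h.operator (tail a) 0‖ ≤ h.defectSeminorm a := by
  let head : L2Seq →ₗ[ℍ[ℝ]ᵐᵒᵖ] ℍ[ℝ] := lp.evalₗ (fun _ : ℕ => ℍ[ℝ]) 2 0
  obtain ⟨L, hLF, hLp⟩ := exists_extension_norm_le_seminorm h.defectSeminorm (LinearMap.ker head)
    ((head ∘ₗ h.operator ∘ₗ tail).domRestrict (LinearMap.ker head))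
    fun a => h.norm_operator_tail_le_defectSeminorm a.2
  obtain ⟨e, he0, he⟩ := exists_head_eq_tail_eq 1 0
  refine ⟨L e, fun a => ?_⟩
  have ker_part : a - op (a 0) • e ∈ LinearMap.ker head := by
    change a 0 - e 0 * a 0 = 0
    rw [he0, one_mul, sub_self]
  have on_ker : L a - L e * a 0 = h.operator (tail a) 0 :=
    calc L a - L e * a 0 = L (a - op (a 0) • e) := by rw [map_sub, map_smul, op_smul_eq_mul]
      _ = h.operator (tail (a - op (a 0) • e)) 0 := hLF ⟨_, ker_part⟩
      _ = h.operator (tail a) 0 := by rw [map_sub, map_smul, he, smul_zero, sub_zero]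
  rw [← on_ker, add_sub_cancel]
  exact hLp a

theorem exists_seqCons (h : HankelBoundedBy γ C) (hC : 0 ≤ C) :
    ∃ x, HankelBoundedBy (seqCons x γ) C := by
  obtain ⟨x, hx⟩ := h.exists_head_norm_le_defectSeminorm
  refine ⟨x, fun a => ?_⟩
  obtain ⟨w, hw0, hw⟩ := exists_head_eq_tail_eq (x * a 0 + h.operator (tail a) 0) (h.operator a)
  refine ⟨w, fun m => ?_, ?_⟩
  · cases m with
    | zero =>
      rw [hw0, ← hasSum_nat_add_iff' 1]
      simpa [tail_apply, seqCons] using h.hasSum_operator (tail a) 0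
    | succ m =>
      rw [← tail_apply, hw]
      simpa only [Nat.add_right_comm m 1, seqCons] using h.hasSum_operator a m
  · have defect_bound : ‖w 0‖ ^ 2 ≤ h.defectSeminorm a ^ 2 := by
      rw [hw0]
      gcongr
      exact hx a
    refine (sq_le_sq₀ (norm_nonneg _) (by positivity)).mp ?_
    rw [h.defectSeminorm_sq] at defect_bound
    rw [norm_sq_eq_head_add_tail, hw, mul_pow]
    linarith

end HankelBoundedBy

end Hankel

/-! ### Bounded Toeplitz matrices -/

section Toeplitz

theorem HankelBoundedBy.sum_norm_sq_le {γ : ℕ → ℍ[ℝ]} {C : ℝ} (h : HankelBoundedBy γ C)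
    (s t : Finset ℕ) (a : ℕ → ℍ[ℝ]) :
    ∑ m ∈ s, ‖∑ k ∈ t, γ (m + k) * a k‖ ^ 2 ≤ C ^ 2 * ∑ k ∈ t, ‖a k‖ ^ 2 := by
  let A : L2Seq := ∑ k ∈ t, lp.single 2 k (a k)
  have A_apply (k : ℕ) : A k = if k ∈ t then a k else 0 := by
    rw [show A k = ∑ i ∈ t, (lp.single 2 i (a i) : L2Seq) k from
      map_sum (lp.evalₗ (𝕜 := ℝ) (fun _ : ℕ => ℍ[ℝ]) 2 k) _ t]
    simp [Pi.single_apply]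
  have norm_A : ‖A‖ ^ 2 = ∑ k ∈ t, ‖a k‖ ^ 2 := by
    simpa using lp.norm_sum_single (p := 2) (by norm_num) a t
  obtain ⟨w, hw, hwA⟩ := h A
  have w_apply (m : ℕ) : w m = ∑ k ∈ t, γ (m + k) * a k := by
    refine (hw m).unique ?_
    have finite_support : ∀ k ∉ t, γ (m + k) * A k = 0 := fun k hk => by
      rw [A_apply, if_neg hk, mul_zero]
    convert hasSum_sum_of_ne_finset_zero (L := .unconditional ℕ) finite_support using 1
    exact Finset.sum_congr rfl fun k hk => by rw [A_apply, if_pos hk]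
  calc ∑ m ∈ s, ‖∑ k ∈ t, γ (m + k) * a k‖ ^ 2 = ∑ m ∈ s, ‖w m‖ ^ 2 := by simp only [w_apply]
    _ ≤ ‖w‖ ^ 2 := sum_le_hasSum s (fun _ _ => sq_nonneg _) (hasSum_norm_sq w)
    _ ≤ (C * ‖A‖) ^ 2 := by gcongr
    _ = C ^ 2 * ∑ k ∈ t, ‖a k‖ ^ 2 := by rw [mul_pow, norm_A]

theorem sum_norm_sq_vecMul_le {ι κ : Type*} {s : Finset ι} {t : Finset κ} {T : ι → κ → ℍ[ℝ]}
    {C : ℝ} (hT : ∀ a : κ → ℍ[ℝ],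
      ∑ i ∈ s, ‖∑ j ∈ t, T i j * a j‖ ^ 2 ≤ C ^ 2 * ∑ j ∈ t, ‖a j‖ ^ 2) (p : ι → ℍ[ℝ]) :
    ∑ j ∈ t, ‖∑ i ∈ s, p i * T i j‖ ^ 2 ≤ C ^ 2 * ∑ i ∈ s, ‖p i‖ ^ 2 := by
  set y : κ → ℍ[ℝ] := fun j => ∑ i ∈ s, p i * T i j
  set Y : ℝ := ∑ j ∈ t, ‖y j‖ ^ 2
  have swap : ∑ j ∈ t, y j * star (y j) = ∑ i ∈ s, p i * ∑ j ∈ t, T i j * star (y j) := by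
    simp only [y, Finset.sum_mul, Finset.mul_sum, mul_assoc]
    exact Finset.sum_comm
  have Y_le : Y ≤ ∑ i ∈ s, ‖p i‖ * ‖∑ j ∈ t, T i j * star (y j)‖ :=
    calc Y = (∑ j ∈ t, y j * star (y j)).re := by
          simp only [Y, norm_sq_eq_re_mul_star]
          exact (map_sum (⟨⟨(·.re), re_zero⟩, re_add⟩ : ℍ[ℝ] →+ ℝ)
            (fun j => y j * star (y j)) t).symm
      _ ≤ ‖∑ i ∈ s, p i * ∑ j ∈ t, T i j * star (y j)‖ := swap ▸ re_le_norm _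
      _ ≤ _ := (norm_sum_le _ _).trans_eq (by simp only [norm_mul])
  have Y_sq_le : Y * Y ≤ (C ^ 2 * ∑ i ∈ s, ‖p i‖ ^ 2) * Y :=
    calc Y * Y ≤ (∑ i ∈ s, ‖p i‖ * ‖∑ j ∈ t, T i j * star (y j)‖) ^ 2 := by rw [← sq]; gcongr
      _ ≤ (∑ i ∈ s, ‖p i‖ ^ 2) * ∑ i ∈ s, ‖∑ j ∈ t, T i j * star (y j)‖ ^ 2 :=
        Finset.sum_mul_sq_le_sq_mul_sq _ _ _
      _ ≤ (∑ i ∈ s, ‖p i‖ ^ 2) * (C ^ 2 * Y) := by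
        gcongr
        simpa only [Quaternion.norm_star] using hT fun j => star (y j)
      _ = _ := by ring
  rcases (by positivity : 0 ≤ Y).eq_or_lt with hY | hY
  · rw [← hY]
    positivity
  · exact le_of_mul_le_mul_right Y_sq_le hY

theorem norm_sum_sum_mul_le {ι : Type*} {s : Finset ι} {T : ι → ι → ℍ[ℝ]} {C : ℝ} (hC : 0 ≤ C)
    (hT : ∀ a : ι → ℍ[ℝ],
      ∑ i ∈ s, ‖∑ j ∈ s, T i j * a j‖ ^ 2 ≤ C ^ 2 * ∑ j ∈ s, ‖a j‖ ^ 2)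
    {p q : ι → ℍ[ℝ]} (hp : ∀ i, ‖p i‖ = 1) (hq : ∀ j, ‖q j‖ = 1) :
    ‖∑ j ∈ s, q j * ∑ i ∈ s, p i * T i j‖ ≤ C * s.card := by
  have row_bound : ∑ j ∈ s, ‖∑ i ∈ s, p i * T i j‖ ^ 2 ≤ C ^ 2 * s.card := by
    simpa [hp] using sum_norm_sq_vecMul_le hT p
  have triangle : ‖∑ j ∈ s, q j * ∑ i ∈ s, p i * T i j‖ ≤ ∑ j ∈ s, ‖∑ i ∈ s, p i * T i j‖ :=
    (norm_sum_le _ _).trans_eq (by simp only [norm_mul, hq, one_mul])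
  refine le_of_sq_le_sq ?_ (by positivity)
  calc ‖∑ j ∈ s, q j * ∑ i ∈ s, p i * T i j‖ ^ 2
      ≤ (∑ j ∈ s, ‖∑ i ∈ s, p i * T i j‖) ^ 2 := by gcongr
    _ ≤ s.card * ∑ j ∈ s, ‖∑ i ∈ s, p i * T i j‖ ^ 2 := sq_sum_le_card_mul_sum_sq
    _ ≤ s.card * (C ^ 2 * s.card) := by gcongr
    _ = (C * s.card) ^ 2 := by ring

/-- The finite sections of the Toeplitz matrix `(d (i - j))` have operator norm at most `C`. -/
def ToeplitzBoundedBy (d : ℤ → ℍ[ℝ]) (C : ℝ) : Prop :=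
  ∀ (N : ℕ) (a : ℕ → ℍ[ℝ]), ∑ i ∈ Finset.range N, ‖∑ j ∈ Finset.range N, d (i - j) * a j‖ ^ 2 ≤
    C ^ 2 * ∑ j ∈ Finset.range N, ‖a j‖ ^ 2

theorem toeplitzBoundedBy_of_hankelBoundedBy {d : ℤ → ℍ[ℝ]} {C : ℝ}
    (h : ∀ N : ℕ, HankelBoundedBy (fun k : ℕ => d (N - 1 - k)) C) : ToeplitzBoundedBy d C := by
  intro N a
  rw [← Finset.sum_range_reflect (fun i : ℕ => ‖∑ j ∈ Finset.range N, d (i - j) * a j‖ ^ 2)]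
  refine (Finset.sum_congr rfl fun i hi => ?_).trans_le
    ((h N).sum_norm_sq_le (Finset.range N) (Finset.range N) a)
  have hi := Finset.mem_range.mp hi
  refine congrArg (‖·‖ ^ 2) (Finset.sum_congr rfl fun j _ => ?_)
  rw [show ((N - 1 - i : ℕ) - j : ℤ) = N - 1 - (i + j : ℕ) by omega]

theorem ToeplitzBoundedBy.summable_norm_sq {d : ℤ → ℍ[ℝ]} {C : ℝ} (h : ToeplitzBoundedBy d C) :
    Summable fun k => ‖d k‖ ^ 2 := by
  refine summable_of_sum_le (c := C ^ 2) (fun k => by positivity) fun u => ?_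
  obtain ⟨n, hn⟩ : ∃ n : ℕ, ∀ k ∈ u, k.natAbs ≤ n :=
    ⟨u.sup Int.natAbs, fun k hk => Finset.le_sup (f := Int.natAbs) hk⟩
  have column_bound : ∑ i ∈ Finset.range (2 * n + 1), ‖d (i - n)‖ ^ 2 ≤ C ^ 2 := by
    have hn : n < 2 * n + 1 := by omega
    simpa [Pi.single_apply, hn, apply_ite] using h (2 * n + 1) (Pi.single n 1)
  refine le_trans ?_ column_bound
  have shift_injOn : Set.InjOn (fun i : ℕ => (i - n : ℤ)) (Finset.range (2 * n + 1)) :=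
    fun i _ j _ hij => by simpa using hij
  rw [← Finset.sum_image (f := fun k => ‖d k‖ ^ 2) shift_injOn]
  refine Finset.sum_le_sum_of_subset_of_nonneg (fun k hk => ?_) fun _ _ _ => by positivity
  have := hn k hk
  exact Finset.mem_image.mpr ⟨(k + n).toNat, Finset.mem_range.mpr (by omega), by omega⟩

theorem HankelBoundedBy.exists_toeplitz_extension {γ : ℕ → ℍ[ℝ]} {C : ℝ}
    (h : HankelBoundedBy γ C) (hC : 0 ≤ C) :
    ∃ d : ℤ → ℍ[ℝ], (∀ j : ℕ, d (-(j + 1)) = γ j) ∧ ToeplitzBoundedBy d C := by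
  let extend (g : {g // HankelBoundedBy g C}) : {g // HankelBoundedBy g C} :=
    ⟨seqCons (g.2.exists_seqCons hC).choose g, (g.2.exists_seqCons hC).choose_spec⟩
  let S (N : ℕ) : {g // HankelBoundedBy g C} := extend^[N] ⟨γ, h⟩
  have S_succ (N : ℕ) : S (N + 1) = extend (S N) := Function.iterate_succ_apply' extend N _
  let d : ℤ → ℍ[ℝ]
    | .ofNat N => (S (N + 1)).1 0
    | .negSucc j => γ j
  have S_eq (N : ℕ) : (S N).1 = fun k : ℕ => d (N - 1 - k) := by
    induction N with
    | zero =>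
      funext k
      rw [show ((0 : ℕ) - 1 - k : ℤ) = .negSucc k by omega]
      rfl
    | succ N ih =>
      funext k
      cases k with
      | zero => rw [show ((N + 1 : ℕ) - 1 - (0 : ℕ) : ℤ) = .ofNat N by simp]
      | succ k =>
        rw [show ((N + 1 : ℕ) - 1 - (k + 1 : ℕ) : ℤ) = N - 1 - k by push_cast; ring, S_succ]
        exact congrFun ih k
  exact ⟨d, fun j => congrArg d (Int.negSucc_eq j).symm,
    toeplitzBoundedBy_of_hankelBoundedBy fun N => S_eq N ▸ (S N).2⟩

end Toeplitz

/-! ### Fejér means -/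

section FejerMean

open Filter Topology

section AddCommMonoid

variable {V : Type*} [AddCommMonoid V]

theorem sum_Icc_neg_natCast (x : ℤ → V) (n : ℕ) :
    ∑ k ∈ Finset.Icc (-(n : ℤ)) n, x k =
      ∑ j ∈ Finset.range n, x (n - j) + ∑ j ∈ Finset.range n, x (j - n) + x 0 := by
  induction n with
  | zero => simp
  | succ n ih =>
    have Icc_succ : Finset.Icc (-((n + 1 : ℕ) : ℤ)) (n + 1 : ℕ) =
        insert (n + 1 : ℤ) (insert (-(n + 1 : ℤ)) (Finset.Icc (-(n : ℤ)) n)) := by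
      ext k
      simp only [Finset.mem_Icc, Finset.mem_insert]
      omega
    rw [Icc_succ, Finset.sum_insert (by simp only [Finset.mem_Icc, Finset.mem_insert]; omega),
      Finset.sum_insert (by simp only [Finset.mem_Icc]; omega), ih, Finset.sum_range_succ',
      Finset.sum_range_succ']
    simp only [Nat.cast_add, Nat.cast_one, Nat.cast_zero, add_sub_add_right_eq_sub, sub_zero,
      zero_sub]
    abel

theorem sum_range_sum_range_sub (x : ℤ → V) (N : ℕ) :
    ∑ i ∈ Finset.range N, ∑ j ∈ Finset.range N, x (i - j) =
      ∑ n ∈ Finset.range N, ∑ k ∈ Finset.Icc (-(n : ℤ)) n, x k := by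
  induction N with
  | zero => simp
  | succ n ih =>
    rw [Finset.sum_range_succ (fun n : ℕ => ∑ k ∈ Finset.Icc (-(n : ℤ)) n, x k) n, ← ih,
      Finset.sum_range_succ, sum_Icc_neg_natCast]
    simp only [Finset.sum_range_succ, Finset.sum_add_distrib, sub_self]
    abel

/-- The `N`-th Fejér mean of a two-sided series: the average of its first `N` symmetric partial
sums. -/
def fejerMean [Module ℝ V] (x : ℤ → V) (N : ℕ) : V :=
  (N : ℝ)⁻¹ • ∑ n ∈ Finset.range N, ∑ k ∈ Finset.Icc (-(n : ℤ)) n, x k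

theorem map_fejerMean {W : Type*} [AddCommMonoid W] [Module ℝ V] [Module ℝ W] (L : V →ₗ[ℝ] W)
    (x : ℤ → V) (N : ℕ) : L (fejerMean x N) = fejerMean (fun k => L (x k)) N := by
  simp only [fejerMean, map_smul, map_sum]

end AddCommMonoid

theorem tendsto_fejerMean {V : Type*} [NormedAddCommGroup V] [NormedSpace ℝ V] {x : ℤ → V} {v : V}
    (hx : HasSum x v) : Tendsto (fejerMean x) atTop (𝓝 v) :=
  (hx.comp (Finset.tendsto_Icc_neg (R := ℤ))).cesaro_smul

theorem ToeplitzBoundedBy.norm_fejerMean_le {d : ℤ → ℍ[ℝ]} {C : ℝ} (h : ToeplitzBoundedBy d C)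
    (hC : 0 ≤ C) {J : ℍ[ℝ]} (hJ : J ^ 2 = -1) (t : ℝ) (N : ℕ) :
    ‖fejerMean (fun k => eI J (k * t) * d k) N‖ ≤ C := by
  have factor (i j : ℕ) : eI J ((i - j : ℤ) * t) * d (i - j) =
      eI J (-(j * t)) * (eI J (i * t) * d (i - j)) := by
    rw [← mul_assoc, ← eI_add hJ]
    push_cast
    ring_nf
  have bound : ‖∑ j ∈ Finset.range N, ∑ i ∈ Finset.range N,
      eI J ((i - j : ℤ) * t) * d (i - j)‖ ≤ C * N := by
    simpa only [factor, ← Finset.mul_sum, Finset.card_range] using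
      norm_sum_sum_mul_le hC (h N) (fun i => norm_eI hJ (i * t)) (fun j => norm_eI hJ (-(j * t)))
  rw [fejerMean, ← sum_range_sum_range_sub (fun k : ℤ => eI J (k * t) * d k), Finset.sum_comm,
    norm_smul, norm_inv, RCLike.norm_natCast]
  exact inv_mul_le_of_le_mul₀ N.cast_nonneg hC (bound.trans_eq (mul_comm _ _))

end FejerMean

/-! ### Biquaternions -/

section Biquaternions

/-- The complexified quaternions `ℍ ⊗ ℂ`: the pair `(α, β)` stands for `α + ι β`, with `ι` a
central square root of `-1`.  Stem functions of slice functions take values here. -/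
abbrev Biquaternion : Type := WithLp 2 (ℍ[ℝ] × ℍ[ℝ])

/-- The evaluation `α + ι β ↦ α + J β`. -/
def evalAt (J : ℍ[ℝ]) : Biquaternion →L[ℝ] ℍ[ℝ] :=
  WithLp.fstL 2 ℝ _ _ + ContinuousLinearMap.mul ℝ ℍ[ℝ] J ∘L WithLp.sndL 2 ℝ _ _

theorem evalAt_apply (J : ℍ[ℝ]) (p : Biquaternion) : evalAt J p = p.fst + J * p.snd := rfl

/-- The biquaternion product `(α + ι β) (x + ι y)`. -/
def starMul : Biquaternion →ₗ[ℝ] Biquaternion →ₗ[ℝ] Biquaternion :=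
  LinearMap.mk₂ ℝ
    (fun p q => WithLp.toLp 2 (p.fst * q.fst - p.snd * q.snd, p.fst * q.snd + p.snd * q.fst))
    (fun p p' q => WithLp.ofLp_injective 2 <| by ext1 <;> simp [add_mul] <;> abel)
    (fun r p q => WithLp.ofLp_injective 2 <| by ext1 <;> simp [smul_sub])
    (fun p q q' => WithLp.ofLp_injective 2 <| by ext1 <;> simp [mul_add] <;> abel)
    (fun r p q => WithLp.ofLp_injective 2 <| by ext1 <;> simp [smul_sub])

theorem starMul_fst (p q : Biquaternion) :
    (starMul p q).fst = p.fst * q.fst - p.snd * q.snd := rfl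

theorem starMul_snd (p q : Biquaternion) :
    (starMul p q).snd = p.fst * q.snd + p.snd * q.fst := rfl

theorem norm_sq_add_two_mul_norm_im_le {p : Biquaternion} {d : ℝ}
    (hp : ∀ J : ℍ[ℝ], J ^ 2 = -1 → ‖evalAt J p‖ ≤ d) :
    ‖p‖ ^ 2 + 2 * ‖(p.fst * star p.snd).im‖ ≤ d ^ 2 := by
  obtain ⟨J, hJ, inner_J⟩ := exists_sq_eq_neg_one_inner_eq_norm (re_im (p.fst * star p.snd))
  obtain ⟨re_J, norm_J⟩ := sq_eq_neg_one_iff.mp hJ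
  have inner_eq : inner ℝ p.fst (J * p.snd) = ‖(p.fst * star p.snd).im‖ := by
    rw [← inner_J, inner_def, inner_def, star_mul, ← mul_assoc]
    simp [re_J]
  calc ‖p‖ ^ 2 + 2 * ‖(p.fst * star p.snd).im‖ = ‖evalAt J p‖ ^ 2 := by
        rw [evalAt_apply, norm_add_sq_real, inner_eq, norm_mul, norm_J,
          WithLp.prod_norm_sq_eq_of_L2]
        ring
    _ ≤ d ^ 2 := by gcongr; exact hp J hJ

theorem norm_im_mul_star_comm (a b : ℍ[ℝ]) : ‖(a * star b).im‖ = ‖(star b * a).im‖ := by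
  refine (sq_eq_sq₀ (norm_nonneg _) (norm_nonneg _)).mp ?_
  have h₁ := norm_sq_eq_re_sq_add_norm_im_sq (a * star b)
  have h₂ := norm_sq_eq_re_sq_add_norm_im_sq (star b * a)
  have re_comm : (a * star b).re = (star b * a).re := by
    simp only [re_mul]
    ring
  rw [norm_mul, mul_comm, ← norm_mul, re_comm] at h₁
  linarith

theorem norm_starMul_sq (p q : Biquaternion) :
    ‖starMul p q‖ ^ 2 = ‖p‖ ^ 2 * ‖q‖ ^ 2 +
      4 * inner ℝ (star p.snd * p.fst).im (q.fst * star q.snd).im := by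
  have cross_terms : inner ℝ (p.fst * q.snd) (p.snd * q.fst) -
      inner ℝ (p.fst * q.fst) (p.snd * q.snd) =
      2 * inner ℝ (star p.snd * p.fst).im (q.fst * star q.snd).im := by
    simp only [inner_def, re_mul, imI_mul, imJ_mul, imK_mul, re_star, imI_star, imJ_star, imK_star,
      re_im, imI_im, imJ_im, imK_im]
    ring
  rw [WithLp.prod_norm_sq_eq_of_L2, WithLp.prod_norm_sq_eq_of_L2 p, WithLp.prod_norm_sq_eq_of_L2 q,
    starMul_fst, starMul_snd, norm_sub_sq_real, norm_add_sq_real]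
  simp only [norm_mul, mul_pow]
  linear_combination 2 * cross_terms

theorem norm_starMul_le {p : Biquaternion} {d : ℝ} (hd : 0 ≤ d)
    (hp : ∀ J : ℍ[ℝ], J ^ 2 = -1 → ‖evalAt J p‖ ≤ d) (q : Biquaternion) :
    ‖starMul p q‖ ≤ d * ‖q‖ := by
  have im_q_le : 2 * ‖(q.fst * star q.snd).im‖ ≤ ‖q‖ ^ 2 := by
    have im_le : ‖(q.fst * star q.snd).im‖ ≤ ‖q.fst‖ * ‖q.snd‖ := by
      rw [← Quaternion.norm_star q.snd, ← norm_mul]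
      refine le_of_sq_le_sq ?_ (norm_nonneg _)
      linarith [norm_sq_eq_re_sq_add_norm_im_sq (q.fst * star q.snd),
        sq_nonneg (q.fst * star q.snd).re]
    rw [WithLp.prod_norm_sq_eq_of_L2]
    linarith [two_mul_le_add_sq ‖q.fst‖ ‖q.snd‖]
  have inner_le := real_inner_le_norm (star p.snd * p.fst).im (q.fst * star q.snd).im
  rw [← norm_im_mul_star_comm] at inner_le
  refine le_of_sq_le_sq ?_ (by positivity)
  calc ‖starMul p q‖ ^ 2
      ≤ ‖p‖ ^ 2 * ‖q‖ ^ 2 +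
        4 * (‖(p.fst * star p.snd).im‖ * ‖(q.fst * star q.snd).im‖) := by
        rw [norm_starMul_sq]
        gcongr
    _ = ‖p‖ ^ 2 * ‖q‖ ^ 2 +
        2 * ‖(p.fst * star p.snd).im‖ * (2 * ‖(q.fst * star q.snd).im‖) := by ring
    _ ≤ ‖p‖ ^ 2 * ‖q‖ ^ 2 + 2 * ‖(p.fst * star p.snd).im‖ * ‖q‖ ^ 2 := by gcongr
    _ = (‖p‖ ^ 2 + 2 * ‖(p.fst * star p.snd).im‖) * ‖q‖ ^ 2 := by ring
    _ ≤ d ^ 2 * ‖q‖ ^ 2 := by gcongr; exact norm_sq_add_two_mul_norm_im_le hp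
    _ = (d * ‖q‖) ^ 2 := by ring

theorem norm_le_of_forall_norm_evalAt_le {p : Biquaternion} {d : ℝ} (hd : 0 ≤ d)
    (hp : ∀ J : ℍ[ℝ], J ^ 2 = -1 → ‖evalAt J p‖ ≤ d) : ‖p‖ ≤ d := by
  refine le_of_sq_le_sq ?_ hd
  linarith [norm_sq_add_two_mul_norm_im_le hp, norm_nonneg (p.fst * star p.snd).im]

/-- The biquaternion whose values at `J` and `-J` are given. -/
def ofEvals (J : ℍ[ℝ]) : ℍ[ℝ] × ℍ[ℝ] →L[ℝ] Biquaternion :=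
  (WithLp.prodContinuousLinearEquiv 2 ℝ ℍ[ℝ] ℍ[ℝ]).symm.toContinuousLinearMap ∘L
    ((2⁻¹ : ℝ) • (ContinuousLinearMap.fst ℝ ℍ[ℝ] ℍ[ℝ] + ContinuousLinearMap.snd ℝ ℍ[ℝ] ℍ[ℝ])).prod
      (-(ContinuousLinearMap.mul ℝ ℍ[ℝ] J ∘L ((2⁻¹ : ℝ) •
        (ContinuousLinearMap.fst ℝ ℍ[ℝ] ℍ[ℝ] - ContinuousLinearMap.snd ℝ ℍ[ℝ] ℍ[ℝ]))))

theorem ofEvals_apply (J a b : ℍ[ℝ]) :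
    ofEvals J (a, b) = WithLp.toLp 2 ((2⁻¹ : ℝ) • (a + b), -(J * (2⁻¹ : ℝ) • (a - b))) := rfl

theorem evalAt_ofEvals (I J a b : ℍ[ℝ]) :
    evalAt J (ofEvals I (a, b)) = (2⁻¹ : ℝ) • ((1 - J * I) * a + (1 + J * I) * b) := by
  change (2⁻¹ : ℝ) • (a + b) + J * -(I * (2⁻¹ : ℝ) • (a - b)) = _
  rw [mul_smul_comm, ← smul_neg, mul_smul_comm, ← smul_add]
  congr 1
  noncomm_ring

theorem ofEvals_evalAt {J : ℍ[ℝ]} (hJ : J ^ 2 = -1) (p : Biquaternion) :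
    ofEvals J (evalAt J p, evalAt (-J) p) = p := by
  have J_mul_J_mul (q : ℍ[ℝ]) : J * (J * q) = -q := by rw [← mul_assoc, ← sq, hJ, neg_one_mul]
  have sum_eq : evalAt J p + evalAt (-J) p = (2 : ℝ) • p.fst := by
    rw [evalAt_apply, evalAt_apply, two_smul, neg_mul]; abel
  have diff_eq : evalAt J p - evalAt (-J) p = (2 : ℝ) • (J * p.snd) := by
    rw [evalAt_apply, evalAt_apply, two_smul, neg_mul]; abel
  rw [ofEvals_apply, sum_eq, diff_eq, inv_smul_smul₀ two_ne_zero, inv_smul_smul₀ two_ne_zero,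
    J_mul_J_mul, neg_neg]
  rfl

end Biquaternions

section Phase

open Real

variable {E : Type*} [NormedAddCommGroup E] [InnerProductSpace ℝ E]

/-- Multiplication by `e^{ιθ} = cos θ + ι sin θ`, from `E` to its complexification. -/
def phase (θ : ℝ) : E →ₗᵢ[ℝ] WithLp 2 (E × E) where
  toFun x := WithLp.toLp 2 (cos θ • x, sin θ • x)
  map_add' x y := WithLp.ofLp_injective 2 <| by ext1 <;> simp
  map_smul' r x := WithLp.ofLp_injective 2 <| by ext1 <;> simp [smul_comm r]
  norm_map' x := by
    refine (sq_eq_sq₀ (norm_nonneg _) (norm_nonneg _)).mp ?_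
    rw [WithLp.prod_norm_sq_eq_of_L2]
    change ‖cos θ • x‖ ^ 2 + ‖sin θ • x‖ ^ 2 = ‖x‖ ^ 2
    rw [norm_smul, norm_smul, mul_pow, mul_pow, norm_eq_abs, norm_eq_abs, sq_abs, sq_abs, ← add_mul,
      cos_sq_add_sin_sq, one_mul]

/-- The adjoint of `phase θ`: the real part of multiplication by `e^{-ιθ}`. -/
def phaseAdj (θ : ℝ) : WithLp 2 (E × E) →L[ℝ] E :=
  cos θ • WithLp.fstL 2 ℝ E E + sin θ • WithLp.sndL 2 ℝ E E

theorem phase_fst (θ : ℝ) (x : E) : (phase θ x).fst = cos θ • x := rfl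

theorem phase_snd (θ : ℝ) (x : E) : (phase θ x).snd = sin θ • x := rfl

theorem phaseAdj_apply (θ : ℝ) (p : WithLp 2 (E × E)) :
    phaseAdj θ p = cos θ • p.fst + sin θ • p.snd := rfl

theorem inner_phase_left (θ : ℝ) (x : E) (p : WithLp 2 (E × E)) :
    inner ℝ (phase θ x) p = inner ℝ x (phaseAdj θ p) := by
  rw [WithLp.prod_inner_apply, phaseAdj_apply, inner_add_right, real_inner_smul_right,
    real_inner_smul_right, ← real_inner_smul_left, ← real_inner_smul_left]
  rfl

theorem phaseAdj_phase (θ τ : ℝ) (x : E) : phaseAdj θ (phase τ x) = cos (θ - τ) • x := by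
  rw [phaseAdj_apply, phase_fst, phase_snd, smul_smul, smul_smul, ← add_smul, cos_sub]

theorem evalAt_phase (J : ℍ[ℝ]) (θ : ℝ) (x : ℍ[ℝ]) : evalAt J (phase θ x) = eI J θ * x := by
  rw [evalAt_apply, phase_fst, phase_snd, eI, add_mul, coe_mul_eq_smul, smul_mul_assoc,
    mul_smul_comm]

theorem phaseAdj_starMul_phase (θ τ : ℝ) (p : Biquaternion) (x : ℍ[ℝ]) :
    phaseAdj θ (starMul p (phase τ x)) = phaseAdj (θ - τ) p * x := by
  simp only [phaseAdj_apply, starMul_fst, starMul_snd, phase_fst, phase_snd, mul_smul_comm,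
    ← smul_mul_assoc, ← sub_mul, ← add_mul, cos_sub, sin_sub]
  congr 1
  module

end Phase

/-! ### Square-integrable functions on the circle -/

section OrthogonalFamily

variable {𝕜 ι E : Type*} {G : ι → Type*} [RCLike 𝕜] [NormedAddCommGroup E] [InnerProductSpace 𝕜 E]
  [∀ i, NormedAddCommGroup (G i)] [∀ i, InnerProductSpace 𝕜 (G i)] {V : ∀ i, G i →ₗᵢ[𝕜] E}

theorem hasSum_norm_sq_of_hasSum (hV : OrthogonalFamily 𝕜 G V) {x : ∀ i, G i} {f : E}
    (hx : HasSum (fun i => V i (x i)) f) : HasSum (fun i => ‖x i‖ ^ 2) (‖f‖ ^ 2) :=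
  (Filter.Tendsto.pow (Filter.Tendsto.norm hx) 2).congr (hV.norm_sum x)

variable [CompleteSpace E] [∀ i, CompleteSpace (G i)]

theorem sum_norm_sq_adjoint_le (hV : OrthogonalFamily 𝕜 G V) (f : E) (s : Finset ι) :
    ∑ i ∈ s, ‖(V i).toContinuousLinearMap.adjoint f‖ ^ 2 ≤ ‖f‖ ^ 2 := by
  set coef := fun i => (V i).toContinuousLinearMap.adjoint f
  set g := ∑ i ∈ s, V i (coef i)
  have norm_g : ‖g‖ ^ 2 = ∑ i ∈ s, ‖coef i‖ ^ 2 := hV.norm_sum coef s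
  have inner_g : inner 𝕜 g f = ((‖g‖ ^ 2 : ℝ) : 𝕜) := by
    rw [norm_g, sum_inner, RCLike.ofReal_sum]
    refine Finset.sum_congr rfl fun i _ => ?_
    rw [RCLike.ofReal_pow, ← inner_self_eq_norm_sq_to_K]
    exact ((V i).toContinuousLinearMap.adjoint_inner_right _ _).symm
  have norm_g_le : ‖g‖ ≤ ‖f‖ := by
    have cauchy_schwarz := norm_inner_le_norm (𝕜 := 𝕜) g f
    rw [inner_g, RCLike.norm_of_nonneg (sq_nonneg _), sq] at cauchy_schwarz
    rcases (norm_nonneg g).eq_or_lt with hg | hg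
    · exact hg ▸ norm_nonneg f
    · exact le_of_mul_le_mul_left cauchy_schwarz hg
  rw [← norm_g]
  gcongr

theorem adjoint_apply_of_hasSum (hV : OrthogonalFamily 𝕜 G V) {x : ∀ i, G i} {f : E}
    (hx : HasSum (fun i => V i (x i)) f) (i : ι) :
    (V i).toContinuousLinearMap.adjoint f = x i := by
  refine ext_inner_left 𝕜 fun y => ?_
  rw [ContinuousLinearMap.adjoint_inner_right]
  refine (hx.mapL (innerSL 𝕜 (V i y))).unique ?_
  rw [← (V i).inner_map_map]
  exact hasSum_single i fun j hj => hV hj.symm _ _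

end OrthogonalFamily

section Circle

open Real

/-- The normalized arc length of the unit circle, in the parameter `t ∈ (0, 2π]`. -/
def circleMeasure : Measure ℝ :=
  (ENNReal.ofReal (2 * π))⁻¹ • volume.restrict (Set.Ioc 0 (2 * π))

instance : IsProbabilityMeasure circleMeasure where
  measure_univ := by
    rw [circleMeasure, Measure.smul_apply, Measure.restrict_apply_univ, Real.volume_Ioc, sub_zero,
      smul_eq_mul, ENNReal.inv_mul_cancel (by simp [pi_pos]) ENNReal.ofReal_ne_top]

theorem measurePreserving_two_pi_sub :
    MeasurePreserving (fun t => 2 * π - t) circleMeasure circleMeasure := by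
  have reflect := (Measure.measurePreserving_sub_left volume (2 * π)).restrict_preimage
    (measurableSet_Ico (a := 0) (b := 2 * π))
  rw [Set.preimage_const_sub_Ico, sub_self, sub_zero, restrict_Ico_eq_restrict_Ioc] at reflect
  exact reflect.smul_measure _

variable {E : Type*} [NormedAddCommGroup E]

theorem integral_circleMeasure [NormedSpace ℝ E] (f : ℝ → E) :
    ∫ t, f t ∂circleMeasure = (2 * π)⁻¹ • ∫ t in (0 : ℝ)..(2 * π), f t := by
  rw [circleMeasure, integral_smul_measure, intervalIntegral.integral_of_le two_pi_pos.le,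
    ENNReal.toReal_inv, ENNReal.toReal_ofReal two_pi_pos.le]

theorem integral_cos_int_mul {n : ℤ} (hn : n ≠ 0) : ∫ t, cos (n * t) ∂circleMeasure = 0 := by
  rw [integral_circleMeasure, intervalIntegral.integral_comp_mul_left _ (by exact_mod_cast hn),
    integral_cos, mul_zero, sin_zero, sub_zero, ← sub_zero (n * (2 * π)), sin_int_mul_two_pi_sub,
    sin_zero, neg_zero, smul_zero, smul_zero]

variable [InnerProductSpace ℝ E]

theorem continuous_phase (x : E) : Continuous fun θ => phase θ x :=
  (WithLp.prod_continuous_toLp 2 E E).comp (by fun_prop)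

theorem integrable_phaseAdj {α : Type*} [MeasurableSpace α] {μ : Measure α} {θ : α → ℝ}
    {f : α → WithLp 2 (E × E)} (hθ : Measurable θ) (hf : Integrable f μ) :
    Integrable (fun t => phaseAdj (θ t) (f t)) μ :=
  .add
    (.bdd_smul ((WithLp.fstL 2 ℝ E E).integrable_comp hf) 1
      (by fun_prop) (.of_forall fun t => abs_cos_le_one (θ t)))
    (.bdd_smul ((WithLp.sndL 2 ℝ E E).integrable_comp hf) 1
      (by fun_prop) (.of_forall fun t => abs_sin_le_one (θ t)))

/-- The `n`-th Fourier coefficient of a function on the circle with values in a complexification,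
with respect to the harmonics `e^{ιnt} x` with real `x`. -/
def circleCoef (f : ℝ → WithLp 2 (E × E)) (n : ℤ) : E :=
  ∫ t, phaseAdj (n * t) (f t) ∂circleMeasure

theorem circleCoef_sub {f g : ℝ → WithLp 2 (E × E)} (hf : Integrable f circleMeasure)
    (hg : Integrable g circleMeasure) (n : ℤ) :
    circleCoef (fun t => f t - g t) n = circleCoef f n - circleCoef g n := by
  simp only [circleCoef, map_sub]
  exact integral_sub (integrable_phaseAdj (by fun_prop) hf) (integrable_phaseAdj (by fun_prop) hg)

theorem circleCoef_congr_ae {f g : ℝ → WithLp 2 (E × E)} (h : f =ᵐ[circleMeasure] g) :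
    circleCoef f = circleCoef g :=
  funext fun _ => integral_congr_ae (h.mono fun _ ht => congrArg _ ht)

theorem memLp_phase (k : ℤ) (x : E) :
    MemLp (fun t : ℝ => phase (k * t) x) 2 circleMeasure :=
  .of_bound ((continuous_phase x).comp (by fun_prop)).aestronglyMeasurable ‖x‖
    (.of_forall fun t => ((phase (k * t)).norm_map x).le)

/-- The function `t ↦ e^{ιkt} x` in `L²` of the circle. -/
def phaseLp (k : ℤ) : E →ₗᵢ[ℝ] Lp (WithLp 2 (E × E)) 2 circleMeasure where
  toFun x := (memLp_phase k x).toLp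
  map_add' x y := by
    simp only [map_add]
    exact MemLp.toLp_add (memLp_phase k x) (memLp_phase k y)
  map_smul' r x := by
    simp only [map_smul]
    exact MemLp.toLp_const_smul r (memLp_phase k x)
  norm_map' x := by
    change ‖(memLp_phase k x).toLp‖ = ‖x‖
    rw [Lp.norm_toLp, eLpNorm_congr_norm_ae (g := fun _ => x)
      (.of_forall fun t => (phase (k * t)).norm_map x),
      eLpNorm_const _ two_ne_zero (NeZero.ne circleMeasure), measure_univ, ENNReal.one_rpow,
      mul_one, toReal_enorm]

theorem coeFn_phaseLp (k : ℤ) (x : E) :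
    phaseLp k x =ᵐ[circleMeasure] fun t => phase (k * t) x :=
  (memLp_phase k x).coeFn_toLp

variable [CompleteSpace E]

theorem adjoint_phaseLp_apply (k : ℤ) (f : Lp (WithLp 2 (E × E)) 2 circleMeasure) :
    (phaseLp k).toContinuousLinearMap.adjoint f = circleCoef f k := by
  have integrable_f : Integrable f circleMeasure := (Lp.memLp f).integrable one_le_two
  refine ext_inner_left ℝ fun x => ?_
  rw [ContinuousLinearMap.adjoint_inner_right, L2.inner_def, circleCoef,
    ← integral_inner (integrable_phaseAdj (by fun_prop) integrable_f)]
  refine integral_congr_ae ?_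
  filter_upwards [coeFn_phaseLp k x] with t ht
  rw [← inner_phase_left, ← ht]
  rfl

theorem orthogonalFamily_phaseLp :
    OrthogonalFamily ℝ (fun _ : ℤ => E) phaseLp := by
  intro k l hkl x y
  change inner ℝ ((phaseLp k).toContinuousLinearMap x) (phaseLp l y) = 0
  rw [← ContinuousLinearMap.adjoint_inner_right, adjoint_phaseLp_apply, circleCoef]
  have integrand : ∀ᵐ t ∂circleMeasure,
      phaseAdj (k * t) (phaseLp l y t) = cos ((k - l : ℤ) * t) • y := by
    filter_upwards [coeFn_phaseLp l y] with t ht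
    rw [ht, phaseAdj_phase]
    push_cast
    ring_nf
  rw [integral_congr_ae integrand, integral_smul_const, integral_cos_int_mul (sub_ne_zero.mpr hkl),
    zero_smul, inner_zero_right]

theorem exists_hasSum_phaseLp {ι : Type*} {k : ι → ℤ} (hk : k.Injective) {x : ι → E}
    (hx : Summable fun i => ‖x i‖ ^ 2) : ∃ f, HasSum (fun i => phaseLp (k i) (x i)) f :=
  ((orthogonalFamily_phaseLp.comp hk).summable_iff_norm_sq_summable x).mpr hx

end Circle

/-! ### The measure on the sphere -/

section SphereMeasure

open Real

variable {σ : Measure IU}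

theorem measurable_eI : Measurable fun p : IU × ℝ => eI p.1.1 p.2 := by
  have measurable_coe : Measurable fun p : IU × ℝ => p.1.1 :=
    measurable_subtype_coe.comp measurable_fst
  unfold eI
  exact (continuous_coe.comp continuous_cos).measurable.comp measurable_snd |>.add <|
    (continuous_sin.measurable.comp measurable_snd).smul measurable_coe

theorem sphereMeasure_eq_map (σ : Measure IU) :
    sphereMeasure σ = (σ.prod circleMeasure).map fun p => eI p.1.1 p.2 := by
  rw [sphereMeasure, circleMeasure, Measure.prod_smul_right, Measure.map_smul]

theorem ae_ae_of_ae_sphereMeasure {P : ℍ[ℝ] → Prop} (h : ∀ᵐ q ∂sphereMeasure σ, P q) :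
    ∀ᵐ I ∂σ, ∀ᵐ t ∂circleMeasure, P (eI I.1 t) := by
  rw [sphereMeasure_eq_map] at h
  exact Measure.ae_ae_of_ae_prod (ae_of_ae_map measurable_eI.aemeasurable h)

theorem ae_sphereMeasure_of_ae_forall {P : ℍ[ℝ] → Prop} (hP : MeasurableSet {q | P q})
    (h : ∀ᵐ t ∂circleMeasure, ∀ I : ℍ[ℝ], I ^ 2 = -1 → P (eI I t)) :
    ∀ᵐ q ∂sphereMeasure σ, P q := by
  rw [sphereMeasure_eq_map, ae_map_iff measurable_eI.aemeasurable hP]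
  filter_upwards [Measure.quasiMeasurePreserving_snd.ae h] with p hp
  exact hp p.1.1 p.1.2

theorem ae_aestronglyMeasurable_comp_eI {X : Type*} [TopologicalSpace X] {g : ℍ[ℝ] → X}
    (hg : AEStronglyMeasurable g (sphereMeasure σ)) :
    ∀ᵐ I ∂σ, AEStronglyMeasurable (fun t => g (eI I.1 t)) circleMeasure := by
  rw [sphereMeasure_eq_map] at hg
  exact (hg.comp_measurable measurable_eI).prodMk_left

end SphereMeasure

section Conjugation

theorem exists_ne_zero_mul_eq_mul {I J : ℍ[ℝ]} (hI : I ^ 2 = -1) (hJ : J ^ 2 = -1) :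
    ∃ u : ℍ[ℝ], u ≠ 0 ∧ I * u = u * J := by
  have intertwines (q : ℍ[ℝ]) : I * (q - I * q * J) = (q - I * q * J) * J := by
    rw [mul_sub, sub_mul, mul_assoc (I * q), ← sq, hJ, mul_assoc I q J, ← mul_assoc I I, ← sq, hI]
    noncomm_ring
  by_contra! no_intertwiner
  have fixed (q : ℍ[ℝ]) : q = I * q * J := by
    by_contra hq
    exact no_intertwiner _ (sub_ne_zero.mpr hq) (intertwines q)
  have J_mul_I : J * I = 1 := mul_eq_one_comm.mp (by simpa using (fixed 1).symm)
  have comm (q : ℍ[ℝ]) : q * I = I * q := by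
    conv_lhs => rw [fixed q, mul_assoc, J_mul_I, mul_one]
  obtain ⟨re_I, norm_I⟩ := sq_eq_neg_one_iff.mp hI
  have comm_i := comm qi
  have comm_j := comm qj
  have I_eq_zero : I = 0 := by
    rw [Quaternion.ext_iff] at comm_i comm_j
    simp only [re_mul, imI_mul, imJ_mul, imK_mul] at comm_i comm_j
    simp only [qi, qj, zero_mul, one_mul, mul_zero, mul_one] at comm_i comm_j
    ext
    · exact re_I
    · simp only [imI_zero]; linarith
    · simp only [imJ_zero]; linarith
    · simp only [imK_zero]; linarith
  exact zero_ne_one ((norm_eq_zero.mpr I_eq_zero).symm.trans norm_I)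

theorem exists_norm_eq_one_inv_mul_mul_eq {I J : ℍ[ℝ]} (hI : I ^ 2 = -1) (hJ : J ^ 2 = -1) :
    ∃ u : ℍ[ℝ], ‖u‖ = 1 ∧ u⁻¹ * I * u = J := by
  obtain ⟨v, hv, intertwines⟩ := exists_ne_zero_mul_eq_mul hI hJ
  have norm_v : ‖v‖ ≠ 0 := norm_ne_zero_iff.mpr hv
  have hu : ‖v‖⁻¹ • v ≠ 0 := smul_ne_zero (inv_ne_zero norm_v) hv
  refine ⟨‖v‖⁻¹ • v, by rw [norm_smul, norm_inv, norm_norm, inv_mul_cancel₀ norm_v], ?_⟩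
  rw [mul_assoc, mul_smul_comm, intertwines, ← smul_mul_assoc, inv_mul_cancel_left₀ hu]

theorem inv_mul_mul_sq {I u : ℍ[ℝ]} (hu : u ≠ 0) (hI : I ^ 2 = -1) : (u⁻¹ * I * u) ^ 2 = -1 := by
  rw [sq, mul_assoc _ u, mul_assoc _ I u, mul_inv_cancel_left₀ hu, mul_assoc _ I, ← mul_assoc I,
    ← sq, hI, neg_one_mul, mul_neg, inv_mul_cancel₀ hu]

theorem inv_mul_eI_mul {u : ℍ[ℝ]} (hu : u ≠ 0) (I : ℍ[ℝ]) (t : ℝ) :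
    u⁻¹ * eI I t * u = eI (u⁻¹ * I * u) t := by
  simp only [eI, mul_add, add_mul, mul_smul_comm, smul_mul_assoc]
  rw [mul_coe_eq_smul, smul_mul_assoc, inv_mul_cancel₀ hu, ← coe_mul_eq_smul, mul_one]

/-- Quasi-invariance of a measure under the rotations `q ↦ u⁻¹ q u`, for `‖u‖ = 1`. -/
def ConjQuasiInvariant (μ : Measure ℍ[ℝ]) : Prop :=
  ∀ u : ℍ[ℝ], ‖u‖ = 1 → μ.map (fun q => u⁻¹ * q * u) ≪ μ

end Conjugation

/-! ### Stem functions -/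

section Stem

open Real

/-- The stem function `F` of a slice function `g` on `∂𝔹`, in the parametrization
`g (cos t + J sin t) = evalAt J (F t)`. -/
def stem (g : ℍ[ℝ] → ℍ[ℝ]) (t : ℝ) : Biquaternion :=
  ofEvals qi (g (eI qi t), g (eI (-qi) t))

theorem stem_sub (g h : ℍ[ℝ] → ℍ[ℝ]) (t : ℝ) : stem (g - h) t = stem g t - stem h t :=
  map_sub (ofEvals qi) (_, _) (_, _)

variable {g h : ℍ[ℝ] → ℍ[ℝ]}

theorem IsSlice.sub (hg : IsSlice g) (hh : IsSlice h) : IsSlice (g - h) := by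
  intro x y I J hI hJ hxy
  rw [Pi.sub_apply, hg x y I J hI hJ hxy, hh x y I J hI hJ hxy]
  simp only [Pi.sub_apply, mul_sub]
  abel

theorem IsSlice.evalAt_stem (hg : IsSlice g) {J : ℍ[ℝ]} (hJ : J ^ 2 = -1) (t : ℝ) :
    evalAt J (stem g t) = g (eI J t) := by
  have represent := hg (cos t) (sin t) qi J qi_sq hJ (cos_sq_add_sin_sq t)
  have eI_neg_qi : (cos t : ℍ[ℝ]) - sin t • qi = eI (-qi) t := by simp [eI, sub_eq_add_neg]
  rw [eI_neg_qi] at represent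
  change g (eI J t) = _ * g (eI qi t) + _ at represent
  rw [represent, div_two_eq_smul, div_two_eq_smul, smul_mul_assoc, smul_mul_assoc, ← smul_add, stem,
    evalAt_ofEvals]

theorem IsSlice.stem_eq_ofEvals (hg : IsSlice g) {J : ℍ[ℝ]} (hJ : J ^ 2 = -1) (t : ℝ) :
    stem g t = ofEvals J (g (eI J t), g (eI (-J) t)) := by
  rw [← hg.evalAt_stem hJ, ← hg.evalAt_stem (by rwa [neg_sq]), ofEvals_evalAt hJ]

theorem ae_norm_le_toReal_eLpNorm_top {α E : Type*} [MeasurableSpace α] [NormedAddCommGroup E]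
    {μ : Measure α} {f : α → E} (hf : MemLp f ⊤ μ) :
    ∀ᵐ x ∂μ, ‖f x‖ ≤ (eLpNorm f ⊤ μ).toReal := by
  filter_upwards [ae_le_eLpNormEssSup (f := f) (μ := μ)] with x hx
  rw [← eLpNorm_exponent_top] at hx
  simpa using ENNReal.toReal_mono hf.eLpNorm_ne_top hx

variable {σ : Measure IU} [NeZero σ]

theorem IsSlice.aestronglyMeasurable_stem (hg : IsSlice g)
    (hgm : AEStronglyMeasurable g (sphereMeasure σ)) :
    AEStronglyMeasurable (stem g) circleMeasure := by
  obtain ⟨I, hI⟩ := (ae_aestronglyMeasurable_comp_eI hgm).exists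
  have h_neg : AEStronglyMeasurable (fun t => g (eI (-I.1) t)) circleMeasure := by
    simpa only [Function.comp_def, eI_two_pi_sub]
      using hI.comp_measurePreserving measurePreserving_two_pi_sub
  rw [funext (hg.stem_eq_ofEvals I.2)]
  exact (ofEvals I.1).continuous.comp_aestronglyMeasurable (hI.prodMk h_neg)

theorem IsSlice.ae_forall_norm_evalAt_stem_le (hσ : ConjQuasiInvariant (sphereMeasure σ))
    (hg : IsSlice g) {d : ℝ} (hd : ∀ᵐ q ∂sphereMeasure σ, ‖g q‖ ≤ d) :
    ∀ᵐ t ∂circleMeasure, ∀ J : ℍ[ℝ], J ^ 2 = -1 → ‖evalAt J (stem g t)‖ ≤ d := by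
  have ne_zero (u : Metric.sphere (0 : ℍ[ℝ]) 1) : (u : ℍ[ℝ]) ≠ 0 := ne_zero_of_mem_unit_sphere u
  let u (n : ℕ) : Metric.sphere (0 : ℍ[ℝ]) 1 := TopologicalSpace.denseSeq _ n
  have bound_conj : ∀ᵐ q ∂sphereMeasure σ, ∀ n, ‖g ((u n : ℍ[ℝ])⁻¹ * q * u n)‖ ≤ d :=
    ae_all_iff.mpr fun n => ae_of_ae_map (by fun_prop) <|
      (hσ (u n) (norm_eq_of_mem_sphere _)).ae_le hd
  obtain ⟨I, hI⟩ := (ae_ae_of_ae_sphereMeasure bound_conj).exists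
  filter_upwards [hI] with t ht J hJ
  obtain ⟨v, norm_v, rfl⟩ := exists_norm_eq_one_inv_mul_mul_eq I.2 hJ
  have continuous_conj : Continuous fun w : Metric.sphere (0 : ℍ[ℝ]) 1 =>
      evalAt ((w : ℍ[ℝ])⁻¹ * I.1 * w) (stem g t) := by
    have := continuous_subtype_val.inv₀ ne_zero
    simp only [evalAt_apply]
    fun_prop
  refine (TopologicalSpace.denseRange_denseSeq (Metric.sphere (0 : ℍ[ℝ]) 1)).induction_on
    (p := fun w => ‖evalAt ((w : ℍ[ℝ])⁻¹ * I.1 * w) (stem g t)‖ ≤ d)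
    ⟨v, mem_sphere_zero_iff_norm.mpr norm_v⟩
    (isClosed_le continuous_conj.norm continuous_const) fun n => ?_
  rw [hg.evalAt_stem (inv_mul_mul_sq (ne_zero _) I.2), ← inv_mul_eI_mul (ne_zero _)]
  exact ht n

theorem IsSlice.memLp_top_stem (hσ : ConjQuasiInvariant (sphereMeasure σ)) (hg : IsSlice g)
    (hgm : MemLp g ⊤ (sphereMeasure σ)) : MemLp (stem g) ⊤ circleMeasure := by
  refine memLp_top_of_bound (hg.aestronglyMeasurable_stem hgm.1)
    (eLpNorm g ⊤ (sphereMeasure σ)).toReal ?_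
  filter_upwards [hg.ae_forall_norm_evalAt_stem_le hσ (ae_norm_le_toReal_eLpNorm_top hgm)] with t ht
  exact norm_le_of_forall_norm_evalAt_le ENNReal.toReal_nonneg ht

end Stem

section FourierCoefficients

open Real

theorem fourierCoef_eq_integral (g : ℍ[ℝ] → ℍ[ℝ]) (I : ℍ[ℝ]) (n : ℤ) :
    fourierCoef g I n = ∫ t, eI I (-(n * t)) * g (eI I t) ∂circleMeasure := by
  rw [integral_circleMeasure, fourierCoef]

theorem fourierCoef_neg (g : ℍ[ℝ] → ℍ[ℝ]) (I : ℍ[ℝ]) (n : ℤ) :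
    fourierCoef g (-I) n = fourierCoef g I n := by
  have reflect := intervalIntegral.integral_comp_sub_left (a := 0) (b := 2 * π)
    (fun t => eI I (-(n * t)) * g (eI I t)) (2 * π)
  rw [sub_self, sub_zero] at reflect
  rw [fourierCoef, fourierCoef, ← reflect]
  refine congrArg _ (intervalIntegral.integral_congr fun t _ => ?_)
  simp only [eI_two_pi_sub, eI_neg, eI_int_mul_two_pi_sub]

theorem eI_neg_mul_evalAt {I : ℍ[ℝ]} (hI : I ^ 2 = -1) (θ : ℝ) (p : Biquaternion) :
    eI I (-θ) * evalAt I p = phaseAdj θ p + I * phaseAdj (θ + π / 2) p := by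
  rw [evalAt_apply, phaseAdj_apply, phaseAdj_apply, eI, cos_neg, sin_neg, cos_add_pi_div_two,
    sin_add_pi_div_two]
  simp only [add_mul, mul_add, coe_mul_eq_smul, smul_mul_assoc, mul_smul_comm, ← mul_assoc I I,
    ← sq, hI, neg_one_mul]
  module

theorem IsSlice.fourierCoef_eq {g : ℍ[ℝ] → ℍ[ℝ]} (hg : IsSlice g)
    (hgi : Integrable (stem g) circleMeasure) {I : ℍ[ℝ]} (hI : I ^ 2 = -1) (n : ℤ) :
    fourierCoef g I n = circleCoef (stem g) n := by
  set X := circleCoef (stem g) n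
  set Y := ∫ t, phaseAdj (n * t + π / 2) (stem g t) ∂circleMeasure
  have split {J : ℍ[ℝ]} (hJ : J ^ 2 = -1) : fourierCoef g J n = X + J * Y := by
    simp only [fourierCoef_eq_integral, ← hg.evalAt_stem hJ, eI_neg_mul_evalAt hJ]
    have integrable_X := integrable_phaseAdj (θ := fun t => n * t) (by fun_prop) hgi
    have integrable_Y := integrable_phaseAdj (θ := fun t => n * t + π / 2) (by fun_prop) hgi
    rw [integral_add integrable_X (integrable_Y.const_mul J)]
    exact congrArg (X + ·) ((ContinuousLinearMap.mul ℝ ℍ[ℝ] J).integral_comp_comm integrable_Y)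
  have odd_part : X + -I * Y = X + I * Y := by
    rw [← split hI, ← split (by rwa [neg_sq]), fourierCoef_neg]
  have : IsAddTorsionFree ℍ[ℝ] := .of_isTorsionFree ℝ _
  rw [add_right_inj, neg_mul, neg_eq_self] at odd_part
  rw [split hI, odd_part, add_zero]

theorem IsSlice.fourierCoef_sub {g h : ℍ[ℝ] → ℍ[ℝ]} (hg : IsSlice g) (hh : IsSlice h)
    (hgi : Integrable (stem g) circleMeasure) (hhi : Integrable (stem h) circleMeasure)
    {I : ℍ[ℝ]} (hI : I ^ 2 = -1) (n : ℤ) :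
    fourierCoef (g - h) I n = fourierCoef g I n - fourierCoef h I n := by
  have stem_eq : stem (g - h) = fun t => stem g t - stem h t := funext (stem_sub g h)
  rw [(hg.sub hh).fourierCoef_eq (stem_eq ▸ hgi.sub hhi) hI, stem_eq, circleCoef_sub hgi hhi,
    hg.fourierCoef_eq hgi hI, hh.fourierCoef_eq hhi hI]

end FourierCoefficients

/-! ### Multiplication operators and the upper bound -/

section Multiplication

variable {α : Type*} [MeasurableSpace α] {μ : Measure α}

/-- The action of bounded functions on `L²` by the pointwise biquaternion product. -/
def starMulLp (p : Lp Biquaternion ⊤ μ) : Lp Biquaternion 2 μ →L[ℝ] Lp Biquaternion 2 μ :=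
  ContinuousLinearMap.holderL μ ⊤ 2 2 starMul.toContinuousBilinearMap p

theorem coeFn_starMulLp (p : Lp Biquaternion ⊤ μ) (f : Lp Biquaternion 2 μ) :
    starMulLp p f =ᵐ[μ] fun t => starMul (p t) (f t) :=
  ContinuousLinearMap.coeFn_holder (r := 2) starMul.toContinuousBilinearMap p f

theorem norm_starMulLp_le {p : Lp Biquaternion ⊤ μ} {d : ℝ} (hd : 0 ≤ d)
    (hp : ∀ᵐ t ∂μ, ∀ J : ℍ[ℝ], J ^ 2 = -1 → ‖evalAt J (p t)‖ ≤ d) (f : Lp Biquaternion 2 μ) :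
    ‖starMulLp p f‖ ≤ d * ‖f‖ := by
  refine Lp.norm_le_mul_norm_of_ae_le_mul ?_
  filter_upwards [coeFn_starMulLp p f, hp] with t product bound
  rw [product]
  exact norm_starMul_le hd bound _

theorem adjoint_phaseLp_starMulLp_phaseLp (p : Lp Biquaternion ⊤ circleMeasure) (n k : ℤ)
    (x : ℍ[ℝ]) :
    (phaseLp n).toContinuousLinearMap.adjoint (starMulLp p (phaseLp k x)) =
      circleCoef p (n - k) * x := by
  have integrable_p : Integrable (fun t => phaseAdj ((n - k : ℤ) * t) (p t)) circleMeasure :=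
    integrable_phaseAdj (by fun_prop) ((Lp.memLp p).integrable le_top)
  rw [adjoint_phaseLp_apply, circleCoef, circleCoef]
  refine Eq.trans (integral_congr_ae ?_)
    (((ContinuousLinearMap.mul ℝ ℍ[ℝ]).flip x).integral_comp_comm integrable_p)
  filter_upwards [coeFn_starMulLp p (phaseLp k x), coeFn_phaseLp k x] with t product harmonic
  rw [product, harmonic, phaseAdj_starMul_phase, Int.cast_sub, sub_mul]
  rfl

theorem hankelBoundedBy_circleCoef {p : ℝ → Biquaternion} (hp : MemLp p ⊤ circleMeasure) {d : ℝ}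
    (hd : 0 ≤ d) (hpd : ∀ᵐ t ∂circleMeasure, ∀ J : ℍ[ℝ], J ^ 2 = -1 → ‖evalAt J (p t)‖ ≤ d) :
    HankelBoundedBy (fun j : ℕ => circleCoef p (-(j + 1))) d := by
  intro a
  let T := starMulLp hp.toLp
  let V (n : ℤ) : ℍ[ℝ] →L[ℝ] Lp Biquaternion 2 circleMeasure := (phaseLp n).toContinuousLinearMap
  obtain ⟨f, hf⟩ := exists_hasSum_phaseLp Nat.cast_injective (hasSum_norm_sq a).summable
  have norm_f : ‖f‖ = ‖a‖ := by
    refine (sq_eq_sq₀ (norm_nonneg _) (norm_nonneg _)).mp ?_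
    exact (hasSum_norm_sq_of_hasSum (orthogonalFamily_phaseLp.comp Nat.cast_injective) hf).unique
      (hasSum_norm_sq a)
  have norm_Tf : ‖T f‖ ≤ d * ‖a‖ := by
    rw [← norm_f]
    refine norm_starMulLp_le hd ?_ f
    filter_upwards [hp.coeFn_toLp, hpd] with t ht bound
    rwa [ht]
  have negative_injective : (fun m : ℕ => -((m : ℤ) + 1)).Injective := fun m m' h => by
    simpa using h
  have bessel := sum_norm_sq_adjoint_le (orthogonalFamily_phaseLp.comp negative_injective) (T f)
  have summable_w := summable_of_sum_le (fun m => sq_nonneg _) bessel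
  refine ⟨⟨fun m => (V (-(m + 1))).adjoint (T f), memℓp_two_of_summable_norm_sq summable_w⟩,
    fun m => ?_, ?_⟩
  · have entry (k : ℕ) : (V (-(m + 1))).adjoint (T (phaseLp k (a k))) =
        circleCoef p (-((m + k : ℕ) + 1)) * a k := by
      rw [adjoint_phaseLp_starMulLp_phaseLp, circleCoef_congr_ae hp.coeFn_toLp]
      push_cast
      ring_nf
    simp only [← entry]
    exact hf.mapL ((V (-(m + 1))).adjoint ∘L T)
  · refine le_trans (le_of_sq_le_sq ?_ (norm_nonneg (T f))) norm_Tf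
    rw [← (hasSum_norm_sq _).tsum_eq]
    exact summable_w.tsum_le_of_sum_le bessel

end Multiplication

/-! ### Slice functions with given Fourier coefficients -/

section SliceOfStem

open Real

/-- The slice function with stem function `F` (which only matters on `[0, π]`): the inverse of
`stem`. -/
def sliceOfStem (F : ℝ → Biquaternion) (q : ℍ[ℝ]) : ℍ[ℝ] :=
  evalAt (‖q.im‖⁻¹ • q.im) (F (arccos q.re))

theorem sliceOfStem_add_smul (F : ℝ → Biquaternion) {J : ℍ[ℝ]} (hJ : J ^ 2 = -1) (x y : ℝ) :
    sliceOfStem F (x + y • J) = evalAt ((|y|⁻¹ * y) • J) (F (arccos x)) := by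
  obtain ⟨re_J, norm_J⟩ := sq_eq_neg_one_iff.mp hJ
  have re_eq : ((x : ℍ[ℝ]) + y • J).re = x := by simp [re_J]
  have im_eq : ((x : ℍ[ℝ]) + y • J).im = y • J := by ext <;> simp [re_J]
  rw [sliceOfStem, re_eq, im_eq, norm_smul, norm_J, mul_one, norm_eq_abs, smul_smul]

theorem isSlice_sliceOfStem (F : ℝ → Biquaternion) : IsSlice (sliceOfStem F) := by
  intro x y I J hI hJ _
  have sub_smul_eq : (x : ℍ[ℝ]) - y • I = x + y • -I := by rw [smul_neg, sub_eq_add_neg]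
  have mul_I_I (b : ℍ[ℝ]) : J * I * (I * b) = -(J * b) := by
    rw [mul_assoc, ← mul_assoc I, ← sq, hI, neg_one_mul, mul_neg]
  rw [sub_smul_eq, sliceOfStem_add_smul F hJ, sliceOfStem_add_smul F hI,
    sliceOfStem_add_smul F (by rwa [neg_sq])]
  simp only [evalAt_apply, div_two_eq_smul, smul_mul_assoc, sub_mul, add_mul, mul_add, one_mul,
    mul_smul_comm, neg_mul, mul_neg, smul_neg, mul_I_I]
  module

theorem measurable_sliceOfStem {F : ℝ → Biquaternion} (hF : Measurable F) :
    Measurable (sliceOfStem F) := by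
  have measurable_F : Measurable fun q : ℍ[ℝ] => F (arccos q.re) :=
    hF.comp (continuous_arccos.comp continuous_re).measurable
  have measurable_im : Measurable fun q : ℍ[ℝ] => q.im := continuous_im.measurable
  exact ((WithLp.fstL 2 ℝ ℍ[ℝ] ℍ[ℝ]).measurable.comp measurable_F).add <|
    (measurable_im.norm.inv.smul measurable_im).mul <|
      (WithLp.sndL 2 ℝ ℍ[ℝ] ℍ[ℝ]).measurable.comp measurable_F

theorem ae_sliceOfStem_eI {F : ℝ → Biquaternion}
    (hF : ∀ᵐ t ∂circleMeasure, ∀ J, evalAt J (F (2 * π - t)) = evalAt (-J) (F t)) :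
    ∀ᵐ t ∂circleMeasure, ∀ J : ℍ[ℝ], J ^ 2 = -1 → sliceOfStem F (eI J t) = evalAt J (F t) := by
  have ae_of_volume {P : ℝ → Prop} (h : ∀ᵐ t, t ∈ Set.Ioc 0 (2 * π) → P t) :
      ∀ᵐ t ∂circleMeasure, P t :=
    Measure.ae_smul_measure ((ae_restrict_iff' measurableSet_Ioc).mpr h) _
  have generic : ∀ᵐ t ∂circleMeasure, t ∈ Set.Ioo 0 π ∪ Set.Ioo π (2 * π) := by
    refine ae_of_volume ?_
    filter_upwards [Measure.ae_ne volume π, Measure.ae_ne volume (2 * π)] with t h₁ h₂ ht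
    rcases lt_or_gt_of_ne h₁ with lt | gt
    · exact .inl ⟨ht.1, lt⟩
    · exact .inr ⟨gt, lt_of_le_of_ne ht.2 h₂⟩
  filter_upwards [hF, generic] with t conj ht J hJ
  rw [eI, sliceOfStem_add_smul F hJ]
  rcases ht with ⟨ht0, htπ⟩ | ⟨htπ, ht2⟩
  · have sin_pos := sin_pos_of_pos_of_lt_pi ht0 htπ
    rw [arccos_cos ht0.le htπ.le, abs_of_pos sin_pos, inv_mul_cancel₀ sin_pos.ne', one_smul]
  · have sin_neg : sin t < 0 := by
      rw [← neg_pos, ← sin_two_pi_sub]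
      exact sin_pos_of_pos_of_lt_pi (by linarith) (by linarith)
    rw [← cos_two_pi_sub, arccos_cos (by linarith) (by linarith), abs_of_neg sin_neg, inv_neg,
      neg_mul, inv_mul_cancel₀ sin_neg.ne, neg_one_smul, conj, neg_neg]

theorem stem_ae_eq_of_ae_eval {g : ℍ[ℝ] → ℍ[ℝ]} {F : ℝ → Biquaternion}
    (h : ∀ᵐ t ∂circleMeasure, ∀ J : ℍ[ℝ], J ^ 2 = -1 → g (eI J t) = evalAt J (F t)) :
    stem g =ᵐ[circleMeasure] F := by
  filter_upwards [h] with t ht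
  rw [stem, ht _ qi_sq, ht _ (by rw [neg_sq, qi_sq]), ofEvals_evalAt qi_sq]

end SliceOfStem

section ToeplitzSymbol

open Filter Topology

theorem coeFn_fejerMean {α E : Type*} [MeasurableSpace α] [NormedAddCommGroup E] [NormedSpace ℝ E]
    {μ : Measure α} {p : ENNReal} (f : ℤ → Lp E p μ) (N : ℕ) :
    ⇑(fejerMean f N) =ᵐ[μ] fun t => fejerMean (fun k => f k t) N := by
  let S (n : ℕ) : Lp E p μ := ∑ k ∈ Finset.Icc (-(n : ℤ)) n, f k
  have partial_sums : ∀ᵐ t ∂μ, ∀ n : ℕ, S n t = ∑ k ∈ Finset.Icc (-(n : ℤ)) n, f k t :=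
    ae_all_iff.mpr fun n => (Lp.coeFn_finsetSum _ f).mono fun t ht => by
      rw [ht, Finset.sum_apply]
  filter_upwards [partial_sums, Lp.coeFn_smul (N : ℝ)⁻¹ (∑ n ∈ Finset.range N, S n),
    Lp.coeFn_finsetSum (Finset.range N) S] with t h_partial h_smul h_sum
  rw [fejerMean, h_smul, Pi.smul_apply, h_sum, Finset.sum_apply]
  simp only [h_partial, fejerMean]

theorem exists_ae_tendsto_fejerMean {d : ℤ → ℍ[ℝ]} {f : Lp Biquaternion 2 circleMeasure}
    (hf : HasSum (fun k => phaseLp k (d k)) f) :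
    ∃ N : ℕ → ℕ, ∀ᵐ t ∂circleMeasure, ∀ J,
      Tendsto (fun i => fejerMean (fun k => eI J (k * t) * d k) (N i)) atTop
        (𝓝 (evalAt J (f t))) := by
  obtain ⟨N, -, ae_tendsto⟩ :=
    (tendstoInMeasure_of_tendsto_Lp (tendsto_fejerMean hf)).exists_seq_tendsto_ae
  refine ⟨N, ?_⟩
  filter_upwards [ae_tendsto, ae_all_iff.mpr (coeFn_fejerMean fun k => phaseLp k (d k)),
    ae_all_iff.mpr fun k => coeFn_phaseLp k (d k)] with t ht mean_eq phase_eq J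
  refine (((evalAt J).continuous.tendsto _).comp ht).congr fun i => ?_
  simp only [Function.comp_apply, mean_eq, phase_eq, ← evalAt_phase]
  exact map_fejerMean (evalAt J).toLinearMap _ _

theorem ToeplitzBoundedBy.exists_isSlice {d : ℤ → ℍ[ℝ]} {C : ℝ} (h : ToeplitzBoundedBy d C)
    (hC : 0 ≤ C) :
    ∃ g : ℍ[ℝ] → ℍ[ℝ], IsSlice g ∧ Measurable g ∧
      (∀ᵐ t ∂circleMeasure, ∀ J : ℍ[ℝ], J ^ 2 = -1 → ‖g (eI J t)‖ ≤ C) ∧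
      Integrable (stem g) circleMeasure ∧
      ∀ J : ℍ[ℝ], J ^ 2 = -1 → ∀ n, fourierCoef g J n = d n := by
  obtain ⟨f, hf⟩ := exists_hasSum_phaseLp Function.injective_id h.summable_norm_sq
  obtain ⟨N, fejer⟩ := exists_ae_tendsto_fejerMean hf
  have conj : ∀ᵐ t ∂circleMeasure, ∀ J, evalAt J (f (2 * Real.pi - t)) = evalAt (-J) (f t) := by
    filter_upwards [fejer, measurePreserving_two_pi_sub.quasiMeasurePreserving.ae fejer]
      with t ht ht' J
    refine tendsto_nhds_unique (ht' J) ?_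
    simpa only [eI_int_mul_two_pi_sub] using ht (-J)
  have g_eI := ae_sliceOfStem_eI conj
  have stem_eq := stem_ae_eq_of_ae_eval g_eI
  have integrable_stem : Integrable (stem (sliceOfStem f)) circleMeasure :=
    ((Lp.memLp f).integrable one_le_two).congr stem_eq.symm
  refine ⟨sliceOfStem f, isSlice_sliceOfStem f,
    measurable_sliceOfStem (Lp.stronglyMeasurable f).measurable, ?_, integrable_stem,
    fun J hJ n => ?_⟩
  · filter_upwards [g_eI, fejer] with t eval_eq ht J hJ
    rw [eval_eq J hJ]
    exact le_of_tendsto (ht J).norm (.of_forall fun i => h.norm_fejerMean_le hC hJ t _)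
  · rw [(isSlice_sliceOfStem f).fourierCoef_eq integrable_stem hJ, circleCoef_congr_ae stem_eq,
      ← adjoint_phaseLp_apply]
    exact adjoint_apply_of_hasSum orthogonalFamily_phaseLp hf n

end ToeplitzSymbol

/-! ### Nehari's theorem -/

section Nehari

/-- The boundary values of bounded slice regular functions, `H^∞(∂𝔹)`: slice `L^∞` functions whose
negative Fourier coefficients vanish. -/
def HInfty (σ : Measure IU) : Set (ℍ[ℝ] → ℍ[ℝ]) :=
  {f | IsSlice f ∧ MemLp f ⊤ (sphereMeasure σ) ∧
    ∀ I : ℍ[ℝ], I ^ 2 = -1 → ∀ n : ℤ, n < 0 → fourierCoef f I n = 0}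

variable {σ : Measure IU}

theorem zero_mem_HInfty : 0 ∈ HInfty σ :=
  ⟨fun _ _ _ _ _ _ _ => by simp, MemLp.zero, fun _ _ _ _ => by simp [fourierCoef]⟩

theorem eLpNorm_top_sphereMeasure_le {g : ℍ[ℝ] → ℍ[ℝ]} {C : ℝ} (hg : Measurable g)
    (h : ∀ᵐ t ∂circleMeasure, ∀ J : ℍ[ℝ], J ^ 2 = -1 → ‖g (eI J t)‖ ≤ C) :
    eLpNorm g ⊤ (sphereMeasure σ) ≤ ENNReal.ofReal C := by
  rw [eLpNorm_exponent_top]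
  exact eLpNormEssSup_le_of_ae_bound
    (ae_sphereMeasure_of_ae_forall (measurableSet_le hg.norm measurable_const) h)

variable [NeZero σ] {φ : ℍ[ℝ] → ℍ[ℝ]}

theorem hankelBoundedBy_eLpNorm_sub (hσ : ConjQuasiInvariant (sphereMeasure σ)) (hφ : IsSlice φ)
    (hφm : MemLp φ ⊤ (sphereMeasure σ)) {f : ℍ[ℝ] → ℍ[ℝ]} (hf : f ∈ HInfty σ) :
    HankelBoundedBy (fun j : ℕ => circleCoef (stem φ) (-(j + 1)))
      (eLpNorm (φ - f) ⊤ (sphereMeasure σ)).toReal := by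
  obtain ⟨f_slice, f_memLp, f_coef⟩ := hf
  have slice := hφ.sub f_slice
  have memLp := hφm.sub f_memLp
  have stem_memLp := slice.memLp_top_stem hσ memLp
  have coef_eq (j : ℕ) :
      circleCoef (stem (φ - f)) (-(j + 1)) = circleCoef (stem φ) (-(j + 1)) := by
    have φ_integrable := (hφ.memLp_top_stem hσ hφm).integrable le_top
    have f_integrable := (f_slice.memLp_top_stem hσ f_memLp).integrable le_top
    rw [← slice.fourierCoef_eq (stem_memLp.integrable le_top) qi_sq,
      hφ.fourierCoef_sub f_slice φ_integrable f_integrable qi_sq,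
      f_coef _ qi_sq _ (by omega), sub_zero, hφ.fourierCoef_eq φ_integrable qi_sq]
  simpa only [coef_eq] using hankelBoundedBy_circleCoef stem_memLp ENNReal.toReal_nonneg
    (slice.ae_forall_norm_evalAt_stem_le hσ (ae_norm_le_toReal_eLpNorm_top memLp))

theorem HankelBoundedBy.exists_mem_HInfty {C : ℝ}
    (h : HankelBoundedBy (fun j : ℕ => circleCoef (stem φ) (-(j + 1))) C) (hC : 0 ≤ C)
    (hσ : ConjQuasiInvariant (sphereMeasure σ)) (hφ : IsSlice φ)
    (hφm : MemLp φ ⊤ (sphereMeasure σ)) :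
    ∃ f ∈ HInfty σ, (eLpNorm (φ - f) ⊤ (sphereMeasure σ)).toReal ≤ C := by
  obtain ⟨d, hd, toeplitz⟩ := h.exists_toeplitz_extension hC
  obtain ⟨ψ, ψ_slice, ψ_meas, ψ_le, ψ_integrable, ψ_coef⟩ := toeplitz.exists_isSlice hC
  have norm_ψ : eLpNorm ψ ⊤ (sphereMeasure σ) ≤ ENNReal.ofReal C :=
    eLpNorm_top_sphereMeasure_le ψ_meas ψ_le
  have ψ_memLp : MemLp ψ ⊤ (sphereMeasure σ) :=
    ⟨ψ_meas.aestronglyMeasurable, norm_ψ.trans_lt ENNReal.ofReal_lt_top⟩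
  refine ⟨φ - ψ, ⟨hφ.sub ψ_slice, hφm.sub ψ_memLp, fun I hI n hn => ?_⟩, ?_⟩
  · obtain ⟨j, rfl⟩ : ∃ j : ℕ, n = -(j + 1) := ⟨(-n - 1).toNat, by omega⟩
    have φ_integrable := (hφ.memLp_top_stem hσ hφm).integrable le_top
    rw [hφ.fourierCoef_sub ψ_slice φ_integrable ψ_integrable hI, hφ.fourierCoef_eq φ_integrable hI,
      ψ_coef I hI, hd, sub_self]
  · rw [sub_sub_cancel]
    exact ENNReal.toReal_le_of_le_ofReal hC norm_ψ

theorem sInf_hankelBoundedBy_eq_sInf_eLpNorm (hσ : ConjQuasiInvariant (sphereMeasure σ))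
    (hφ : IsSlice φ) (hφm : MemLp φ ⊤ (sphereMeasure σ)) :
    sInf {C | 0 ≤ C ∧ HankelBoundedBy (fun j : ℕ => circleCoef (stem φ) (-(j + 1))) C} =
      sInf ((fun f => (eLpNorm (φ - f) ⊤ (sphereMeasure σ)).toReal) '' HInfty σ) := by
  have bounded {f : ℍ[ℝ] → ℍ[ℝ]} (hf : f ∈ HInfty σ) :=
    hankelBoundedBy_eLpNorm_sub hσ hφ hφm hf
  apply le_antisymm
  · refine le_csInf ⟨_, Set.mem_image_of_mem _ zero_mem_HInfty⟩ ?_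
    rintro _ ⟨f, hf, rfl⟩
    exact csInf_le ⟨0, fun C hC => hC.1⟩ ⟨ENNReal.toReal_nonneg, bounded hf⟩
  · refine le_csInf ⟨_, ENNReal.toReal_nonneg, bounded zero_mem_HInfty⟩ ?_
    rintro C ⟨hC, hankel⟩
    obtain ⟨f, hf, norm_le⟩ := hankel.exists_mem_HInfty hC hσ hφ hφm
    refine (csInf_le ⟨0, ?_⟩ (Set.mem_image_of_mem _ hf)).trans norm_le
    rintro _ ⟨g, -, rfl⟩
    exact ENNReal.toReal_nonneg

end Nehari

theorem hankel_norm_eq_distance_general (σ : Measure IU) [NeZero σ]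
    (hσ : ConjQuasiInvariant (sphereMeasure σ))
    (φ : ℍ[ℝ] → ℍ[ℝ]) (hφ : IsSlice φ) (hφm : AEStronglyMeasurable φ (sphereMeasure σ))
    (hφtop : eLpNorm φ ⊤ (sphereMeasure σ) ≠ ⊤) (c : ℤ → ℍ[ℝ])
    (I : ℍ[ℝ]) (hI : I ^ 2 = -1) (hc : ∀ n : ℤ, fourierCoef φ I n = c n) :
    sInf {C : ℝ | 0 ≤ C ∧
        ∀ a : lp (fun _ : ℕ => ℍ[ℝ]) 2,
          ∃ w : lp (fun _ : ℕ => ℍ[ℝ]) 2,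
            (∀ m : ℕ, HasSum (fun k : ℕ => c (-((m : ℤ) + 1) - (k : ℤ)) * a k) (w m)) ∧
            ‖w‖ ≤ C * ‖a‖}
      = sInf {d : ℝ | ∃ f : ℍ[ℝ] → ℍ[ℝ], IsSlice f ∧
          AEStronglyMeasurable f (sphereMeasure σ) ∧ eLpNorm f ⊤ (sphereMeasure σ) ≠ ⊤ ∧
          (∀ I : ℍ[ℝ], I ^ 2 = -1 → ∀ n : ℤ, n < 0 → fourierCoef f I n = 0) ∧
          d = (eLpNorm (φ - f) ⊤ (sphereMeasure σ)).toReal} := by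
  have index (m k : ℕ) : -((m : ℤ) + 1) - k = -(((m + k : ℕ) : ℤ) + 1) := by
    push_cast
    ring
  have hφM : MemLp φ ⊤ (sphereMeasure σ) := ⟨hφm, hφtop.lt_top⟩
  have c_eq (n : ℤ) : circleCoef (stem φ) n = c n := by
    rw [← hc, hφ.fourierCoef_eq ((hφ.memLp_top_stem hσ hφM).integrable le_top) hI]
  have nehari := sInf_hankelBoundedBy_eq_sInf_eLpNorm hσ hφ hφM
  simp only [HankelBoundedBy, c_eq] at nehari
  simp only [index]
  refine nehari.trans (congrArg sInf (Set.ext fun d => ?_))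
  simp only [Set.mem_image, HInfty, Set.mem_ofPred_eq, MemLp, lt_top_iff_ne_top, and_assoc,
    eq_comm (a := d)]

/-- Quaternionic Nehari theorem, sharp form: for `φ ∈ L^∞ₛ(∂𝔹)` the operator norm of the
Hankel operator `H_φ : H²(∂𝔹) → H²₋(∂𝔹)`, `H_φ f = ℙ₋(φ ⋆ f)`, equals the `L^∞` distance
of `φ` from the bounded slice regular functions `H^∞(∂𝔹)`.  `H²(∂𝔹)` and `H²₋(∂𝔹)` are
identified with `ℓ²(ℕ, ℍ)` via coefficients, `H_φ` acting by `wₘ = Σ_{k ≥ 0} c(-(m+1)-k) aₖ`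
where `c` are the Fourier coefficients of `φ`; the operator norm is the infimum of the bounds
`C`, and `H^∞(∂𝔹)` consists of the slice `L^∞` functions with vanishing negative Fourier
coefficients.  The measure `Σ` is assumed to have the natural symmetries of `dσ dt`. -/
theorem hankel_norm_eq_distance (σ : Measure IU) [IsProbabilityMeasure σ]
    (hinv : ∀ u : Quaternion ℝ, ‖u‖ = 1 →
      Measure.map (fun q => u⁻¹ * q * u) (sphereMeasure σ) = sphereMeasure σ)
    (hconj : Measure.map (star : Quaternion ℝ → Quaternion ℝ) (sphereMeasure σ)
      = sphereMeasure σ)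
    (φ : Quaternion ℝ → Quaternion ℝ) (hφ : IsSlice φ)
    (hφm : AEStronglyMeasurable φ (sphereMeasure σ))
    (hφtop : eLpNorm φ ⊤ (sphereMeasure σ) ≠ ⊤)
    (c : ℤ → Quaternion ℝ)
    (hc : ∀ I : Quaternion ℝ, I ^ 2 = -1 → ∀ n : ℤ, fourierCoef φ I n = c n) :
    sInf {C : ℝ | 0 ≤ C ∧
        ∀ a : lp (fun _ : ℕ => Quaternion ℝ) 2,
          ∃ w : lp (fun _ : ℕ => Quaternion ℝ) 2,
            (∀ m : ℕ, HasSum (fun k : ℕ => c (-((m : ℤ) + 1) - (k : ℤ)) * a k) (w m)) ∧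
            ‖w‖ ≤ C * ‖a‖}
      = sInf {d : ℝ | ∃ f : Quaternion ℝ → Quaternion ℝ, IsSlice f ∧
          AEStronglyMeasurable f (sphereMeasure σ) ∧ eLpNorm f ⊤ (sphereMeasure σ) ≠ ⊤ ∧
          (∀ I : Quaternion ℝ, I ^ 2 = -1 → ∀ n : ℤ, n < 0 → fourierCoef f I n = 0) ∧
          d = (eLpNorm (φ - f) ⊤ (sphereMeasure σ)).toReal} :=
  hankel_norm_eq_distance_general σ (fun u hu => (hinv u hu).absolutelyContinuous) φ hφ hφm hφtop
    c qi qi_sq (hc qi qi_sq)
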